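/- arXiv:2406.12720 — 3 statements merged into one kernel-verified Lean document; each statement's English description precedes it below -/
import Mathlib

section
/- Let 0 < s < 1 and 0 < α < 2s. Define c_α = ∫₀^∞ [(1+t)₊^α + (1-t)₊^α - 2] t^{-(1+2s)} dt. Then the integral converges absolutely, and c_α < 0 for 0 < α < s, c_α = 0 for α = s, and c_α > 0 for s < α < 2s. -/
/-! At the exponent `α = s` the integrand has an antiderivative on `(0, 1)`. Let
`g t = ((1 + t) ^ s - 1) / t ^ (1 + 2 * s)` be the contribution of `(1 + t)₊ ^ s`. The substitution
`t = u / (1 - u)`, that is `1 + t = (1 - u)⁻¹`, turns `g` into the contribution of `(1 - u) ^ s`,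
up to the derivative of `(1 - (1 - u) ^ s) ^ 2 / (2 * s * u ^ (2 * s))`. Hence the integrand is the
derivative of that function minus `∫ t in u..u / (1 - u), g t`, where the last term vanishes as
`u → 0` even when `g` is not integrable at `0`. The boundary values show that the integrals over
`(0, 1)` and `(1, ∞)` cancel. For other exponents, strict concavity of fractional powers makes
`(x ^ α - 1) / α` strictly increasing in `α`, so `c_α / α` is strictly increasing and vanishes
at `α = s`. -/

open MeasureTheory Filter Set Asymptotics intervalIntegral
open scoped Topology

theorem isBigO_symmetric_secondDiff_of_analyticAt {𝕜 E F : Type*} [NontriviallyNormedField 𝕜]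
    [NormedAddCommGroup E] [NormedSpace 𝕜 E] [NormedAddCommGroup F] [NormedSpace 𝕜 F]
    {f : E → F} {x : E} (hf : AnalyticAt 𝕜 f x) :
    (fun y => f (x + y) + f (x - y) - 2 • f x) =O[𝓝 0] fun y => ‖y‖ ^ 2 := by
  obtain ⟨p, hp⟩ := hf
  have hplus := hp.isBigO_sub_partialSum_pow 2
  have hminus : (fun y => f (x - y) - p.partialSum 2 (-y)) =O[𝓝 0] fun y => ‖y‖ ^ 2 := by
    have hneg : Tendsto (fun y : E => -y) (𝓝 0) (𝓝 0) := by
      simpa only [neg_zero] using (continuous_neg (G := E)).tendsto 0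
    simpa only [Function.comp_def, ← sub_eq_add_neg, norm_neg] using hplus.comp_tendsto hneg
  refine (hplus.add hminus).congr_left fun y => ?_
  have hlin : p 1 (fun _ => -y) = -p 1 (fun _ => y) := by
    simpa using (p 1).map_smul_univ (fun _ => (-1 : 𝕜)) fun _ => y
  simp only [FormalMultilinearSeries.partialSum, Finset.sum_range_succ, Finset.sum_range_zero,
    hp.coeff_zero, hlin, two_smul]
  abel

theorem setIntegral_lt_setIntegral {X : Type*} [MeasurableSpace X] {μ : Measure X} {A : Set X}
    {f g : X → ℝ} (hA : MeasurableSet A) (hμ : μ A ≠ 0) (hf : IntegrableOn f A μ)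
    (hg : IntegrableOn g A μ) (hlt : ∀ x ∈ A, f x < g x) :
    ∫ x in A, f x ∂μ < ∫ x in A, g x ∂μ := by
  have hsupport : A ⊆ Function.support fun x => g x - f x :=
    fun x hx => (sub_pos.2 (hlt x hx)).ne'
  rw [← sub_pos, ← integral_sub hg hf, setIntegral_pos_iff_support_of_nonneg_ae
    (ae_restrict_of_forall_mem hA fun x hx => (sub_pos.2 (hlt x hx)).le) (hg.sub hf),
    inter_eq_right.2 hsupport]
  exact pos_iff_ne_zero.2 hμ

theorem hasDerivAt_integral_of_continuousOn {g a b : ℝ → ℝ} {I : Set ℝ} {a' b' u : ℝ}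
    (hg : ContinuousOn g I) (hI : IsOpen I) (hc : I.OrdConnected)
    (ha : HasDerivAt a a' u) (hb : HasDerivAt b b' u) (hau : a u ∈ I) (hbu : b u ∈ I) :
    HasDerivAt (fun v => ∫ t in a v..b v, g t) (g (b u) * b' - g (a u) * a') u := by
  have h := (integral_hasFDerivAt (hg.mono (hc.uIcc_subset hau hbu)).intervalIntegrable
    (hg.stronglyMeasurableAtFilter hI _ hau) (hg.stronglyMeasurableAtFilter hI _ hbu)
    (hg.continuousAt (hI.mem_nhds hau)) (hg.continuousAt (hI.mem_nhds hbu))).comp_hasDerivAt u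
      (ha.prodMk hb)
  refine h.congr_deriv ?_
  simp only [sub_apply, ContinuousLinearMap.smulRight_apply, ContinuousLinearMap.coe_snd',
    ContinuousLinearMap.coe_fst', smul_eq_mul]
  ring

theorem integrableOn_Ioi_one_rpow_neg {b : ℝ} (hb : 0 < b) :
    IntegrableOn (fun t : ℝ => t ^ (-(1 + b))) (Ioi 1) :=
  integrableOn_Ioi_rpow_of_lt (by linarith) one_pos

theorem integral_Ioi_one_rpow_neg {b : ℝ} (hb : 0 < b) :
    ∫ t in Ioi (1 : ℝ), t ^ (-(1 + b)) = 1 / b := by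
  rw [integral_Ioi_rpow_of_lt (by linarith) one_pos, Real.one_rpow,
    show -(1 + b) + 1 = -b by ring, neg_div_neg_eq]

theorem rpow_sub_one_div_lt_rpow_sub_one_div {x α β : ℝ} (hx : 0 ≤ x) (hx1 : x ≠ 1)
    (hα : 0 < α) (hαβ : α < β) :
    (x ^ α - 1) / α < (x ^ β - 1) / β := by
  have hβ : 0 < β := hα.trans hαβ
  have hne : x ^ β - 1 ≠ 0 := by
    rwa [sub_ne_zero, ← Real.one_rpow β, Ne, Real.rpow_left_inj hx zero_le_one hβ.ne']
  have bernoulli := rpow_one_add_lt_one_add_mul_self (s := x ^ β - 1) (p := α / β)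
    (by linarith [Real.rpow_nonneg hx β]) hne (div_pos hα hβ) ((div_lt_one hβ).2 hαβ)
  rw [add_sub_cancel, ← Real.rpow_mul hx, mul_div_cancel₀ _ hβ.ne'] at bernoulli
  rw [div_lt_iff₀ hα]
  calc x ^ α - 1 < α / β * (x ^ β - 1) := by linarith
    _ = (x ^ β - 1) / β * α := by ring

/-- The symmetric second difference at `1`, with step `t`, of the truncated power `x₊ ^ α`. -/
noncomputable def truncPowSecondDiff (α t : ℝ) : ℝ :=
  max (1 + t) 0 ^ α + max (1 - t) 0 ^ α - 2

/-- The constant `c_α`, as a function of both `s` and `α`. -/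
noncomputable def truncPowConst (s α : ℝ) : ℝ :=
  ∫ t in Ioi (0 : ℝ), truncPowSecondDiff α t / t ^ (1 + 2 * s)

theorem continuous_truncPowSecondDiff {α : ℝ} (hα : 0 ≤ α) :
    Continuous (truncPowSecondDiff α) := by
  unfold truncPowSecondDiff
  fun_prop (disch := exact fun _ => Or.inr hα)

theorem truncPowSecondDiff_of_le_one {α t : ℝ} (ht0 : 0 ≤ t) (ht1 : t ≤ 1) :
    truncPowSecondDiff α t = (1 + t) ^ α + (1 - t) ^ α - 2 := by
  rw [truncPowSecondDiff, max_eq_left (by linarith), max_eq_left (by linarith)]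

theorem truncPowSecondDiff_of_one_le {α t : ℝ} (hα : α ≠ 0) (ht : 1 ≤ t) :
    truncPowSecondDiff α t = (1 + t) ^ α - 2 := by
  rw [truncPowSecondDiff, max_eq_left (by linarith), max_eq_right (by linarith),
    Real.zero_rpow hα, add_zero]

theorem isBigO_truncPowSecondDiff_nhdsGT_zero (α : ℝ) :
    truncPowSecondDiff α =O[𝓝[>] 0] fun t => t ^ (2 : ℝ) := by
  have hanalytic : AnalyticAt ℝ (fun x : ℝ => x ^ α) 1 :=
    (Real.contDiffAt_rpow_const_of_ne one_ne_zero).analyticAt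
  have h := (isBigO_symmetric_secondDiff_of_analyticAt hanalytic).mono
    (nhdsWithin_le_nhds (s := Ioi 0))
  refine h.congr' ?_ ?_
  · filter_upwards [Ioo_mem_nhdsGT zero_lt_one] with t ht
    rw [truncPowSecondDiff_of_le_one ht.1.le ht.2.le, Real.one_rpow, nsmul_one, Nat.cast_ofNat]
  · exact .of_forall fun t => by simp only [Real.norm_eq_abs, sq_abs, Real.rpow_two]

theorem isBigO_truncPowSecondDiff_atTop {α : ℝ} (hα : 0 < α) :
    truncPowSecondDiff α =O[atTop] fun t => t ^ α := by
  refine IsBigO.of_bound (2 ^ α + 2) ?_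
  filter_upwards [eventually_ge_atTop 1] with t ht
  have hpow : (1 + t) ^ α ≤ 2 ^ α * t ^ α := by
    rw [← Real.mul_rpow zero_le_two (by linarith)]
    gcongr
    linarith
  have hone : 1 ≤ t ^ α := Real.one_le_rpow ht hα.le
  have hnonneg : 0 ≤ (1 + t) ^ α := by positivity
  rw [truncPowSecondDiff_of_one_le hα.ne' ht, Real.norm_of_nonneg (zero_le_one.trans hone),
    Real.norm_eq_abs, abs_le]
  constructor <;> linarith

theorem integrableOn_truncPowSecondDiff_div {s α : ℝ} (hs : s < 1) (hα0 : 0 < α)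
    (hα : α < 2 * s) :
    IntegrableOn (fun t => truncPowSecondDiff α t / t ^ (1 + 2 * s)) (Ioi 0) := by
  have h := mellin_convergent_of_isBigO_scalar (s := -(2 * s)) (a := -α) (b := -2)
    ((continuous_truncPowSecondDiff hα0.le).locallyIntegrable.locallyIntegrableOn _)
    (by simpa only [neg_neg] using isBigO_truncPowSecondDiff_atTop hα0) (by linarith)
    (by simpa only [neg_neg] using isBigO_truncPowSecondDiff_nhdsGT_zero α) (by linarith)
  refine h.congr_fun (fun t (ht : 0 < t) => ?_) measurableSet_Ioi
  simp only
  rw [show -(2 * s) - 1 = -(1 + 2 * s) by ring, Real.rpow_neg ht.le, inv_mul_eq_div]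

theorem truncPowSecondDiff_div_lt {α β t : ℝ} (hα : 0 < α) (hαβ : α < β) (ht : 0 < t) :
    truncPowSecondDiff α t / α < truncPowSecondDiff β t / β := by
  have hsplit (γ : ℝ) : truncPowSecondDiff γ t / γ =
      (max (1 + t) 0 ^ γ - 1) / γ + (max (1 - t) 0 ^ γ - 1) / γ := by
    rw [truncPowSecondDiff]
    ring
  have hplus : max (1 + t) 0 ≠ 1 := (lt_max_of_lt_left (by linarith)).ne'
  have hminus : max (1 - t) 0 ≠ 1 := (max_lt (by linarith) one_pos).ne
  rw [hsplit, hsplit]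
  exact add_lt_add (rpow_sub_one_div_lt_rpow_sub_one_div (le_max_right _ _) hplus hα hαβ)
    (rpow_sub_one_div_lt_rpow_sub_one_div (le_max_right _ _) hminus hα hαβ)

theorem strictMonoOn_truncPowConst_div {s : ℝ} (hs : s < 1) :
    StrictMonoOn (fun α => truncPowConst s α / α) (Ioo 0 (2 * s)) := by
  intro α hα β hβ hαβ
  simp only [truncPowConst]
  rw [← MeasureTheory.integral_div, ← MeasureTheory.integral_div]
  refine setIntegral_lt_setIntegral measurableSet_Ioi (by simp)
    ((integrableOn_truncPowSecondDiff_div hs hα.1 hα.2).div_const α)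
    ((integrableOn_truncPowSecondDiff_div hs hβ.1 hβ.2).div_const β) fun t ht => ?_
  rw [div_right_comm, div_right_comm _ _ β]
  exact div_lt_div_of_pos_right (truncPowSecondDiff_div_lt hα.1 hαβ ht)
    (Real.rpow_pos_of_pos ht _)

/-- The contribution of `(1 + t)₊ ^ α` to the integrand of `truncPowConst s α`. For `t > 0` no
truncation is needed. -/
noncomputable def forwardQuot (s α t : ℝ) : ℝ :=
  ((1 + t) ^ α - 1) / t ^ (1 + 2 * s)

theorem continuousOn_forwardQuot (s α : ℝ) : ContinuousOn (forwardQuot s α) (Ioi 0) := by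
  have hbase (t : ℝ) (ht : t ∈ Ioi (0 : ℝ)) : 1 + t ≠ 0 := (add_pos one_pos ht).ne'
  exact (((continuousOn_const.add continuousOn_id).rpow_const
    fun t ht => Or.inl (hbase t ht)).sub continuousOn_const).div
    (continuousOn_id.rpow_const fun t ht => Or.inl (ne_of_gt ht))
    fun t ht => (Real.rpow_pos_of_pos ht _).ne'

theorem intervalIntegrable_forwardQuot (s α : ℝ) {a b : ℝ} (ha : 0 < a) (hb : 0 < b) :
    IntervalIntegrable (forwardQuot s α) volume a b :=
  ((continuousOn_forwardQuot s α).mono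
    (ordConnected_Ioi.uIcc_subset ha hb)).intervalIntegrable

theorem forwardQuot_eq_add_rpow {s α t : ℝ} (hα : α ≠ 0) (ht : 1 ≤ t) :
    forwardQuot s α t = truncPowSecondDiff α t / t ^ (1 + 2 * s) + t ^ (-(1 + 2 * s)) := by
  rw [truncPowSecondDiff_of_one_le hα ht, Real.rpow_neg (by linarith), forwardQuot]
  ring

theorem integrableOn_forwardQuot_Ioi_one {s α : ℝ} (hs : s < 1) (hα0 : 0 < α) (hα : α < 2 * s) :
    IntegrableOn (forwardQuot s α) (Ioi 1) :=
  (((integrableOn_truncPowSecondDiff_div hs hα0 hα).mono_set (Ioi_subset_Ioi zero_le_one)).add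
    (integrableOn_Ioi_one_rpow_neg (hα0.trans hα))).congr_fun
    (fun _ ht => (forwardQuot_eq_add_rpow hα0.ne' (le_of_lt ht)).symm) measurableSet_Ioi

theorem integral_forwardQuot_Ioi_one {s α : ℝ} (hs : s < 1) (hα0 : 0 < α) (hα : α < 2 * s) :
    ∫ t in Ioi 1, forwardQuot s α t =
      (∫ t in Ioi 1, truncPowSecondDiff α t / t ^ (1 + 2 * s)) + 1 / (2 * s) := by
  have hpos : 0 < 2 * s := hα0.trans hα
  rw [← integral_Ioi_one_rpow_neg hpos, ← integral_add
    ((integrableOn_truncPowSecondDiff_div hs hα0 hα).mono_set (Ioi_subset_Ioi zero_le_one))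
    (integrableOn_Ioi_one_rpow_neg hpos)]
  exact setIntegral_congr_fun measurableSet_Ioi
    fun _ ht => forwardQuot_eq_add_rpow hα0.ne' (le_of_lt ht)

theorem norm_forwardQuot_le {s α t : ℝ} (hα0 : 0 ≤ α) (hα1 : α ≤ 1) (ht : 0 < t) :
    ‖forwardQuot s α t‖ ≤ t ^ (-(2 * s)) := by
  have hupper : (1 + t) ^ α ≤ 1 + α * t :=
    rpow_one_add_le_one_add_mul_self (by linarith) hα0 hα1
  have hlower : 1 ≤ (1 + t) ^ α := Real.one_le_rpow (by linarith) hα0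
  rw [forwardQuot, Real.norm_of_nonneg (div_nonneg (by linarith) (by positivity))]
  calc ((1 + t) ^ α - 1) / t ^ (1 + 2 * s) ≤ t / t ^ (1 + 2 * s) := by
        gcongr
        nlinarith
    _ = t ^ (-(2 * s)) := by
        rw [Real.rpow_add ht, Real.rpow_one, Real.rpow_neg ht.le]
        field_simp

theorem tendsto_rpow_nhdsGT_zero {p : ℝ} (hp : 0 < p) :
    Tendsto (fun u : ℝ => u ^ p) (𝓝[>] 0) (𝓝 0) := by
  have h := (Real.continuousAt_rpow_const 0 p (Or.inr hp.le)).tendsto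
  rw [Real.zero_rpow hp.ne'] at h
  exact h.mono_left nhdsWithin_le_nhds

theorem hasDerivAt_div_one_sub {u : ℝ} (hu : u ≠ 1) :
    HasDerivAt (fun v : ℝ => v / (1 - v)) (1 / (1 - u) ^ 2) u := by
  refine ((hasDerivAt_id' u).div ((hasDerivAt_id' u).const_sub 1)
    (sub_ne_zero.2 hu.symm)).congr_deriv ?_
  ring

theorem tendsto_div_one_sub_nhdsLT_one :
    Tendsto (fun u : ℝ => u / (1 - u)) (𝓝[<] 1) atTop := by
  have hden : Tendsto (fun u : ℝ => 1 - u) (𝓝[<] 1) (𝓝[>] 0) := by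
    refine tendsto_nhdsWithin_iff.2 ⟨?_, ?_⟩
    · have h : Tendsto (fun u : ℝ => 1 - u) (𝓝 1) (𝓝 (1 - 1)) := tendsto_const_nhds.sub tendsto_id
      rw [sub_self] at h
      exact h.mono_left nhdsWithin_le_nhds
    · filter_upwards [self_mem_nhdsWithin] with u (hu : u < 1) using sub_pos.2 hu
  exact (tendsto_id.mono_left nhdsWithin_le_nhds).pos_mul_atTop one_pos
    hden.inv_tendsto_nhdsGT_zero

theorem tendsto_integral_forwardQuot_nhdsGT_zero {s α : ℝ} (hs0 : 0 ≤ s) (hs1 : s < 1)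
    (hα0 : 0 ≤ α) (hα1 : α ≤ 1) :
    Tendsto (fun u => ∫ t in u..u / (1 - u), forwardQuot s α t) (𝓝[>] 0) (𝓝 0) := by
  have hbound : Tendsto (fun u : ℝ => u ^ (2 - 2 * s) / (1 - u)) (𝓝[>] 0) (𝓝 0) := by
    have hden : Tendsto (fun u : ℝ => 1 - u) (𝓝[>] 0) (𝓝 (1 - 0)) :=
      (tendsto_const_nhds.sub tendsto_id).mono_left nhdsWithin_le_nhds
    simpa only [sub_zero, div_one, Pi.div_def] using
      (tendsto_rpow_nhdsGT_zero (by linarith : 0 < 2 - 2 * s)).div hden (by norm_num)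
  refine squeeze_zero_norm' ?_ hbound
  filter_upwards [Ioo_mem_nhdsGT zero_lt_one] with u ⟨hu0, hu1⟩
  have : 0 < 1 - u := sub_pos.2 hu1
  have hlen : u / (1 - u) - u = u ^ 2 / (1 - u) := by
    field_simp
    ring
  have hle : u ≤ u / (1 - u) := sub_nonneg.1 (hlen ▸ by positivity)
  have hquot : ∀ t ∈ uIoc u (u / (1 - u)), ‖forwardQuot s α t‖ ≤ u ^ (-(2 * s)) := by
    intro t ht
    rw [uIoc_of_le hle] at ht
    exact (norm_forwardQuot_le hα0 hα1 (hu0.trans ht.1)).trans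
      (Real.rpow_le_rpow_of_nonpos hu0 ht.1.le (by linarith))
  calc ‖∫ t in u..u / (1 - u), forwardQuot s α t‖
      ≤ u ^ (-(2 * s)) * |u / (1 - u) - u| := norm_integral_le_of_norm_le_const hquot
    _ = u ^ (2 - 2 * s) / (1 - u) := by
        rw [hlen, abs_of_nonneg (by positivity), show 2 - 2 * s = -(2 * s) + 2 by ring,
          Real.rpow_add hu0, Real.rpow_two, mul_div_assoc]

theorem tendsto_integral_forwardQuot_nhdsLT_one {s α : ℝ}
    (hint : IntegrableOn (forwardQuot s α) (Ioi 1)) :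
    Tendsto (fun u => ∫ t in u..u / (1 - u), forwardQuot s α t) (𝓝[<] 1)
      (𝓝 (∫ t in Ioi 1, forwardQuot s α t)) := by
  have hleft : Tendsto (fun u => ∫ t in u..1, forwardQuot s α t) (𝓝[<] 1) (𝓝 0) := by
    have hmem : (1 : ℝ) ∈ Ioi 0 := mem_Ioi.2 one_pos
    have h := (hasDerivAt_integral_of_continuousOn (continuousOn_forwardQuot s α) isOpen_Ioi
      ordConnected_Ioi (hasDerivAt_id' 1) (hasDerivAt_const 1 1) hmem hmem).continuousAt.tendsto
    rw [integral_same] at h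
    exact h.mono_left nhdsWithin_le_nhds
  have hright := intervalIntegral_tendsto_integral_Ioi 1 hint tendsto_div_one_sub_nhdsLT_one
  rw [← zero_add (∫ t in Ioi 1, forwardQuot s α t)]
  refine (hleft.add hright).congr' ?_
  filter_upwards [Ioo_mem_nhdsLT zero_lt_one] with u ⟨hu0, hu1⟩
  exact integral_add_adjacent_intervals (intervalIntegrable_forwardQuot s α hu0 one_pos)
    (intervalIntegrable_forwardQuot s α one_pos (div_pos hu0 (sub_pos.2 hu1)))

/-- The elementary part of the antiderivative on `(0, 1)` of the integrand of
`truncPowConst s s`. -/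
noncomputable def elementaryPart (s u : ℝ) : ℝ :=
  (1 - (1 - u) ^ s) ^ 2 / u ^ (2 * s) / (2 * s)

theorem hasDerivAt_elementaryPart {s u : ℝ} (hs : s ≠ 0) (hu0 : 0 < u) (hu1 : u < 1) :
    HasDerivAt (elementaryPart s)
      (forwardQuot s s (u / (1 - u)) * (1 / (1 - u) ^ 2) -
        (1 - (1 - u) ^ s) / u ^ (1 + 2 * s)) u := by
  have hv : 0 < 1 - u := sub_pos.2 hu1
  have hpow : HasDerivAt (fun u : ℝ => (1 - u) ^ s) (-(s * (1 - u) ^ (s - 1))) u :=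
    (((hasDerivAt_id' u).const_sub 1).rpow_const (Or.inl hv.ne')).congr_deriv (by ring)
  refine ((((hpow.const_sub 1).pow 2).div (Real.hasDerivAt_rpow_const (Or.inl hu0.ne'))
    (Real.rpow_pos_of_pos hu0 _).ne').div_const (2 * s)).congr_deriv ?_
  have hbase : 1 + u / (1 - u) = (1 - u)⁻¹ := by
    field_simp
    ring
  have : 0 < u ^ s := Real.rpow_pos_of_pos hu0 s
  have : 0 < (1 - u) ^ s := Real.rpow_pos_of_pos hv s
  simp only [forwardQuot, hbase, Pi.pow_apply, Real.inv_rpow hv.le, Real.div_rpow hu0.le hv.le,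
    two_mul s, Real.rpow_sub hv, Real.rpow_sub hu0, Real.rpow_add hu0, Real.rpow_add hv,
    Real.rpow_one]
  field_simp
  ring

theorem elementaryPart_one {s : ℝ} (hs : s ≠ 0) : elementaryPart s 1 = 1 / (2 * s) := by
  simp [elementaryPart, Real.zero_rpow hs]

theorem tendsto_elementaryPart_nhdsLT_one {s : ℝ} (hs : 0 < s) :
    Tendsto (elementaryPart s) (𝓝[<] 1) (𝓝 (1 / (2 * s))) := by
  have hcont : ContinuousAt (elementaryPart s) 1 :=
    (((continuousAt_const.sub ((continuousAt_const.sub continuousAt_id).rpow_const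
      (Or.inr hs.le))).pow 2).div (continuousAt_id.rpow_const (Or.inl one_ne_zero))
      (by simp)).div_const _
  rw [← elementaryPart_one hs.ne']
  exact hcont.tendsto.mono_left nhdsWithin_le_nhds

theorem tendsto_elementaryPart_nhdsGT_zero {s : ℝ} (hs0 : 0 < s) (hs1 : s < 1) :
    Tendsto (elementaryPart s) (𝓝[>] 0) (𝓝 0) := by
  have hbound : Tendsto (fun u : ℝ => u ^ (2 - 2 * s) / (2 * s)) (𝓝[>] 0) (𝓝 0) := by
    simpa only [zero_div] using
      (tendsto_rpow_nhdsGT_zero (by linarith : 0 < 2 - 2 * s)).div_const (2 * s)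
  refine squeeze_zero' ?_ ?_ hbound
  · filter_upwards [self_mem_nhdsWithin] with u (hu : 0 < u)
    rw [elementaryPart]
    positivity
  · filter_upwards [Ioo_mem_nhdsGT zero_lt_one] with u ⟨hu0, hu1⟩
    have hlower : 1 - u ≤ (1 - u) ^ s :=
      Real.self_le_rpow_of_le_one (by linarith) (by linarith) hs1.le
    have hupper : (1 - u) ^ s ≤ 1 := Real.rpow_le_one (by linarith) (by linarith) hs0.le
    rw [elementaryPart, Real.rpow_sub hu0, Real.rpow_two]
    gcongr
    linarith

theorem hasDerivAt_elementaryPart_sub_integral {s u : ℝ} (hs : s ≠ 0) (hu : u ∈ Ioo (0 : ℝ) 1) :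
    HasDerivAt (fun v => elementaryPart s v - ∫ t in v..v / (1 - v), forwardQuot s s t)
      (truncPowSecondDiff s u / u ^ (1 + 2 * s)) u := by
  obtain ⟨hu0, hu1⟩ := hu
  have hintegral := hasDerivAt_integral_of_continuousOn (continuousOn_forwardQuot s s) isOpen_Ioi
    ordConnected_Ioi (hasDerivAt_id' u) (hasDerivAt_div_one_sub hu1.ne) hu0
    (div_pos hu0 (sub_pos.2 hu1))
  refine ((hasDerivAt_elementaryPart hs hu0 hu1).sub hintegral).congr_deriv ?_
  rw [truncPowSecondDiff_of_le_one hu0.le hu1.le, forwardQuot, forwardQuot]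
  ring

theorem integral_zero_one_truncPowSecondDiff_self {s : ℝ} (hs0 : 0 < s) (hs1 : s < 1) :
    ∫ t in (0 : ℝ)..1, truncPowSecondDiff s t / t ^ (1 + 2 * s) =
      1 / (2 * s) - ∫ t in Ioi 1, forwardQuot s s t := by
  have hα : s < 2 * s := by linarith
  have hint : IntervalIntegrable (fun t => truncPowSecondDiff s t / t ^ (1 + 2 * s)) volume 0 1 :=
    (intervalIntegrable_iff_integrableOn_Ioc_of_le zero_le_one).2
      ((integrableOn_truncPowSecondDiff_div hs1 hs0 hα).mono_set Ioc_subset_Ioi_self)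
  have hzero := (tendsto_elementaryPart_nhdsGT_zero hs0 hs1).sub
    (tendsto_integral_forwardQuot_nhdsGT_zero hs0.le hs1 hs0.le hs1.le)
  have hone := (tendsto_elementaryPart_nhdsLT_one hs0).sub
    (tendsto_integral_forwardQuot_nhdsLT_one (integrableOn_forwardQuot_Ioi_one hs1 hs0 hα))
  rw [integral_eq_sub_of_hasDerivAt_of_tendsto one_pos
    (fun u => hasDerivAt_elementaryPart_sub_integral hs0.ne') hint hzero hone, sub_zero, sub_zero]

theorem truncPowConst_self {s : ℝ} (hs0 : 0 < s) (hs1 : s < 1) : truncPowConst s s = 0 := by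
  have hα : s < 2 * s := by linarith
  have hint := integrableOn_truncPowSecondDiff_div hs1 hs0 hα
  rw [truncPowConst, ← integral_interval_add_Ioi hint (hint.mono_set (Ioi_subset_Ioi zero_le_one)),
    integral_zero_one_truncPowSecondDiff_self hs0 hs1, integral_forwardQuot_Ioi_one hs1 hs0 hα]
  ring

/-- The one-dimensional constant `c_α = ∫₀^∞ [(1+t)₊^α + (1-t)₊^α - 2] t^{-(1+2s)} dt`
is well-defined (absolutely convergent) and its sign is that of `α - s`. -/
theorem stmt5 (s α : ℝ) (hs0 : 0 < s) (hs1 : s < 1) (hα0 : 0 < α) (hα2 : α < 2 * s) :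
    IntegrableOn (fun t : ℝ =>
        (max (1 + t) 0 ^ α + max (1 - t) 0 ^ α - 2) / t ^ (1 + 2 * s)) (Set.Ioi 0) ∧
      (α < s → (∫ t in Set.Ioi (0 : ℝ),
        (max (1 + t) 0 ^ α + max (1 - t) 0 ^ α - 2) / t ^ (1 + 2 * s)) < 0) ∧
      (α = s → (∫ t in Set.Ioi (0 : ℝ),
        (max (1 + t) 0 ^ α + max (1 - t) 0 ^ α - 2) / t ^ (1 + 2 * s)) = 0) ∧
      (s < α → 0 < ∫ t in Set.Ioi (0 : ℝ),
        (max (1 + t) 0 ^ α + max (1 - t) 0 ^ α - 2) / t ^ (1 + 2 * s)) := by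
  change IntegrableOn (fun t => truncPowSecondDiff α t / t ^ (1 + 2 * s)) (Ioi 0) ∧
    (α < s → truncPowConst s α < 0) ∧ (α = s → truncPowConst s α = 0) ∧
    (s < α → 0 < truncPowConst s α)
  have hzero : truncPowConst s s = 0 := truncPowConst_self hs0 hs1
  have hmono := strictMonoOn_truncPowConst_div hs1
  have hα : α ∈ Ioo 0 (2 * s) := ⟨hα0, hα2⟩
  have hs : s ∈ Ioo 0 (2 * s) := ⟨hs0, by linarith⟩
  refine ⟨integrableOn_truncPowSecondDiff_div hs1 hα0 hα2, fun hlt => ?_, fun heq => ?_,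
    fun hlt => ?_⟩
  · have h := hmono hα hs hlt
    simpa only [hzero, zero_div, div_lt_iff₀ hα0, zero_mul] using h
  · rw [heq, hzero]
  · have h := hmono hs hα hlt
    simpa only [hzero, zero_div, div_pos_iff_of_pos_right hα0] using h
end

section
/- The function (x_N)₊^s (positive part of the last coordinate raised to the power s) is s-harmonic in the upper half-space: for every x ∈ ℝ^N with x_N > 0, the fractional Laplacian (-Δ)^s applied to w_s(x) = (x_N)₊^s equals zero. -/
open MeasureTheory

/-!
After normalising `x_N = 1` and passing to polar coordinates, everything reduces to the vanishing of
`∫₀^∞ G(t) t ^ (-(1 + 2 s)) dt`, where `G(t) = (1 + t) ^ s + (1 - t)₊ ^ s - 2`. Integrate over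
`(ε, ∞)` instead. Integration by parts turns the term `(1 + t) ^ s` into a boundary term plus half
the integral over `(ε, ∞)` of `K(t) = (1 + t) ^ (s - 1) t ^ (-2 s)`. The substitution
`t = u / (1 + u)` turns the term `(1 - t)₊ ^ s` into a boundary term minus half the integral of the
same `K`, now over `(ε / (1 - ε), ∞)`. What is left is `G(ε) ε ^ (-2 s) / (2 s)` plus half the
integral of `K` over `(ε, ε / (1 - ε))`. Both are `O(ε ^ (2 - 2 s))`, since `G(ε)` and the length
of that interval are `O(ε ^ 2)`.
-/

noncomputable section

open Filter Metric Module Set Topology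

/-- The symmetric second difference of `u` at `x` with increment `y`. Its integral against
`‖y‖ ^ (-(N + 2 s))` is, up to the constant `-c_{N,s} / 2`, the fractional Laplacian of `u`. -/
def secondDiff {E : Type*} [AddCommGroup E] (u : E → ℝ) (x y : E) : ℝ :=
  u (x + y) + u (x - y) - 2 * u x

/-- The one-dimensional profile `t₊ ^ s` of the function `w_s`. -/
def posPartRpow (s t : ℝ) : ℝ := max t 0 ^ s

section SecondDifference

lemma secondDiff_abs (u : ℝ → ℝ) (x y : ℝ) : secondDiff u x |y| = secondDiff u x y := by
  rcases abs_choice y with h | h <;> rw [h]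
  simp only [secondDiff, sub_neg_eq_add, ← sub_eq_add_neg]
  ring

lemma secondDiff_zero_right {E : Type*} [AddCommGroup E] (u : E → ℝ) (x : E) :
    secondDiff u x 0 = 0 := by
  simp only [secondDiff, add_zero, sub_zero]
  ring

lemma posPartRpow_mul {a : ℝ} (ha : 0 ≤ a) (s t : ℝ) :
    posPartRpow s (a * t) = a ^ s * posPartRpow s t := by
  rw [posPartRpow, ← mul_zero a, ← mul_max_of_nonneg _ _ ha, Real.mul_rpow ha (le_max_right _ _),
    posPartRpow]

lemma secondDiff_posPartRpow_comp {E : Type*} [AddCommGroup E] [Module ℝ E] (ℓ : E →ₗ[ℝ] ℝ)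
    (s : ℝ) {x : E} (hx : 0 < ℓ x) (y : E) :
    secondDiff (fun z => posPartRpow s (ℓ z)) x y =
      ℓ x ^ s * secondDiff (posPartRpow s) 1 (((ℓ x)⁻¹ • ℓ) y) := by
  have h (t : ℝ) : posPartRpow s t = ℓ x ^ s * posPartRpow s (t / ℓ x) := by
    rw [← posPartRpow_mul hx.le, mul_div_cancel₀ _ hx.ne']
  simp only [secondDiff, map_add, map_sub, LinearMap.smul_apply, smul_eq_mul]
  rw [h (ℓ x + ℓ y), h (ℓ x - ℓ y), h (ℓ x), add_div, sub_div, div_self hx.ne',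
    div_eq_inv_mul (ℓ y)]
  ring

variable {s t : ℝ}

lemma posPartRpow_of_nonneg (ht : 0 ≤ t) : posPartRpow s t = t ^ s := by
  rw [posPartRpow, max_eq_left ht]

lemma secondDiff_posPartRpow_one (ht : -1 ≤ t) :
    secondDiff (posPartRpow s) 1 t = (1 + t) ^ s + posPartRpow s (1 - t) - 2 := by
  rw [secondDiff, posPartRpow_of_nonneg (by linarith : 0 ≤ 1 + t),
    posPartRpow_of_nonneg zero_le_one, Real.one_rpow, mul_one]

lemma abs_secondDiff_posPartRpow_one_le_sq (hs0 : 0 ≤ s) (hs1 : s ≤ 1) (ht : |t| ≤ 1) :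
    |secondDiff (posPartRpow s) 1 t| ≤ 2 * t ^ 2 := by
  obtain ⟨ht1, ht2⟩ := abs_le.1 ht
  have h_add : 0 ≤ 1 + t := by linarith
  have h_sub : 0 ≤ 1 - t := by linarith
  have h_upper : (1 + t) ^ s + (1 - t) ^ s ≤ 2 := by
    have h₁ := rpow_one_add_le_one_add_mul_self ht1 hs0 hs1
    have h₂ := rpow_one_add_le_one_add_mul_self (neg_le_neg ht2) hs0 hs1
    rw [← sub_eq_add_neg] at h₂
    linarith
  -- The lower bound is AM-GM for the two powers, whose product is `(1 - t ^ 2) ^ s`.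
  have h_prod : (1 - t ^ 2) ^ 2 ≤ (1 + t) ^ s * (1 - t) ^ s := by
    have h_sq : 0 ≤ 1 - t ^ 2 := by nlinarith
    calc (1 - t ^ 2) ^ 2 ≤ 1 - t ^ 2 := by nlinarith [sq_nonneg t]
      _ ≤ (1 - t ^ 2) ^ s := Real.self_le_rpow_of_le_one h_sq (by nlinarith [sq_nonneg t]) hs1
      _ = (1 + t) ^ s * (1 - t) ^ s := by rw [← Real.mul_rpow h_add h_sub]; ring_nf
  have h_lower : 2 * (1 - t ^ 2) ≤ (1 + t) ^ s + (1 - t) ^ s := by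
    have h_nonneg : 0 ≤ (1 + t) ^ s + (1 - t) ^ s := by positivity
    refine abs_le_of_sq_le_sq' ?_ h_nonneg |>.2
    nlinarith [sq_nonneg ((1 + t) ^ s - (1 - t) ^ s)]
  rw [secondDiff_posPartRpow_one ht1, posPartRpow_of_nonneg h_sub, abs_le]
  constructor <;> nlinarith [sq_nonneg t]

lemma abs_secondDiff_posPartRpow_one_le_rpow (hs0 : 0 ≤ s) (hs1 : s ≤ 1) (ht : 1 ≤ |t|) :
    |secondDiff (posPartRpow s) 1 t| ≤ 2 * |t| ^ s := by
  rw [← secondDiff_abs]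
  have h_add : (1 + |t|) ^ s ≤ 1 + |t| ^ s := by
    simpa using Real.rpow_add_le_add_rpow zero_le_one (abs_nonneg t) hs0 hs1
  have h_abs : 1 ≤ |t| ^ s := Real.one_le_rpow ht hs0
  have h_one_add : 1 ≤ (1 + |t|) ^ s := Real.one_le_rpow (by linarith) hs0
  have h_sub_le : posPartRpow s (1 - |t|) ≤ 1 :=
    Real.rpow_le_one (le_max_right _ _) (max_le (by linarith) zero_le_one) hs0
  have h_sub_nonneg : 0 ≤ posPartRpow s (1 - |t|) := Real.rpow_nonneg (le_max_right _ _) s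
  rw [secondDiff_posPartRpow_one (by linarith), abs_le]
  constructor <;> linarith

lemma abs_secondDiff_posPartRpow_one_le_min (hs0 : 0 ≤ s) (hs1 : s ≤ 1) (t : ℝ) :
    |secondDiff (posPartRpow s) 1 t| ≤ min (2 * |t| ^ (2 : ℝ)) (2 * |t| ^ s) := by
  have hs2 : s ≤ 2 := by linarith
  have h_sq : |t| ^ (2 : ℝ) = t ^ 2 := by rw [Real.rpow_two, sq_abs]
  rcases le_total |t| 1 with ht | ht
  · have h := abs_secondDiff_posPartRpow_one_le_sq hs0 hs1 ht
    rw [← h_sq] at h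
    refine le_min h (h.trans ?_)
    gcongr 2 * ?_
    exact Real.rpow_le_rpow_of_exponent_ge_of_imp (abs_nonneg t) ht hs2 fun _ _ => by linarith
  · have h := abs_secondDiff_posPartRpow_one_le_rpow hs0 hs1 ht
    refine le_min (h.trans ?_) h
    gcongr

@[fun_prop]
lemma measurable_posPartRpow : Measurable (posPartRpow s) := by
  unfold posPartRpow
  fun_prop

@[fun_prop]
lemma measurable_secondDiff_posPartRpow (x : ℝ) : Measurable (secondDiff (posPartRpow s) x) := by
  unfold secondDiff
  fun_prop

end SecondDifference

section TruncatedIntegral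

variable {p q c ε : ℝ}

lemma continuousOn_one_add_rpow_mul_rpow (p q : ℝ) :
    ContinuousOn (fun t : ℝ => (1 + t) ^ p * t ^ q) (Ioi 0) := by
  intro t (ht : 0 < t)
  have h_add : 1 + t ≠ 0 := by positivity
  exact (((continuousAt_const.add continuousAt_id).rpow_const (Or.inl h_add)).mul
    (continuousAt_id.rpow_const (Or.inl ht.ne'))).continuousWithinAt

lemma one_add_rpow_mul_rpow_eq {t : ℝ} (ht : 0 < t) (p q : ℝ) :
    (1 + t) ^ p * t ^ q = (1 + t⁻¹) ^ p * t ^ (p + q) := by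
  have h : 1 + t = (1 + t⁻¹) * t := by field_simp; ring
  rw [h, Real.mul_rpow (by positivity) ht.le, Real.rpow_add ht, mul_assoc]

lemma tendsto_one_add_inv_rpow_atTop (p : ℝ) :
    Tendsto (fun t : ℝ => (1 + t⁻¹) ^ p) atTop (𝓝 1) := by
  simpa using (tendsto_inv_atTop_zero.const_add (1 : ℝ)).rpow_const (p := p) (by simp)

lemma tendsto_one_add_rpow_mul_rpow_atTop (hpq : p + q < 0) :
    Tendsto (fun t : ℝ => (1 + t) ^ p * t ^ q) atTop (𝓝 0) := by
  have h := (tendsto_one_add_inv_rpow_atTop p).mul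
    (tendsto_rpow_neg_atTop (neg_pos.2 hpq))
  rw [mul_zero, neg_neg] at h
  refine h.congr' ?_
  filter_upwards [eventually_gt_atTop 0] with t ht
  exact (one_add_rpow_mul_rpow_eq ht p q).symm

lemma integrableOn_one_add_rpow_mul_rpow_Ioi (hpq : p + q < -1) (hc : 0 < c) :
    IntegrableOn (fun t : ℝ => (1 + t) ^ p * t ^ q) (Ioi c) := by
  have h_cont := (continuousOn_one_add_rpow_mul_rpow p q).mono (Ici_subset_Ioi.2 hc)
  have h_bigO : (fun t : ℝ => (1 + t) ^ p * t ^ q) =O[atTop] fun t => t ^ (p + q) := by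
    have h := ((tendsto_one_add_inv_rpow_atTop p).isBigO_one ℝ).mul
      (Asymptotics.isBigO_refl (fun t : ℝ => t ^ (p + q)) atTop)
    simp only [one_mul] at h
    refine h.congr' ?_ .rfl
    filter_upwards [eventually_gt_atTop 0] with t ht
    exact (one_add_rpow_mul_rpow_eq ht p q).symm
  refine ((h_cont.locallyIntegrableOn measurableSet_Ici).integrableOn_of_isBigO_atTop h_bigO
    ⟨Ioi 1, Ioi_mem_atTop 1, integrableOn_Ioi_rpow_of_lt hpq one_pos⟩).mono_set Ioi_subset_Ici_self

lemma integral_Ioi_one_add_rpow_mul_rpow_by_parts (hpq : p + q < 0) (hc : 0 < c) :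
    p * (∫ t in Ioi c, (1 + t) ^ (p - 1) * t ^ q) + q * ∫ t in Ioi c, (1 + t) ^ p * t ^ (q - 1) =
      -((1 + c) ^ p * c ^ q) := by
  have h_int₁ : IntegrableOn (fun t : ℝ => (1 + t) ^ (p - 1) * t ^ q) (Ioi c) :=
    integrableOn_one_add_rpow_mul_rpow_Ioi (by linarith) hc
  have h_int₂ : IntegrableOn (fun t : ℝ => (1 + t) ^ p * t ^ (q - 1)) (Ioi c) :=
    integrableOn_one_add_rpow_mul_rpow_Ioi (by linarith) hc
  have h_deriv : ∀ t ∈ Ici c, HasDerivAt (fun t : ℝ => (1 + t) ^ p * t ^ q)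
      (p * ((1 + t) ^ (p - 1) * t ^ q) + q * ((1 + t) ^ p * t ^ (q - 1))) t := by
    intro t ht
    have ht0 : 0 < t := hc.trans_le ht
    have h_ne : 1 + t ≠ 0 := by positivity
    have h_add := ((hasDerivAt_id t).const_add 1).rpow_const (p := p) (Or.inl h_ne)
    convert! h_add.mul (Real.hasDerivAt_rpow_const (p := q) (Or.inl ht0.ne')) using 1
    simp only [id]
    ring
  have h := integral_Ioi_of_hasDerivAt_of_tendsto' h_deriv
    ((h_int₁.const_mul p).add (h_int₂.const_mul q)) (tendsto_one_add_rpow_mul_rpow_atTop hpq)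
  rwa [integral_add (h_int₁.const_mul p) (h_int₂.const_mul q), integral_const_mul,
    integral_const_mul, zero_sub] at h

lemma image_div_one_add_Ioi (hε0 : 0 < ε) (hε1 : ε < 1) :
    (fun u : ℝ => u / (1 + u)) '' Ioi (ε / (1 - ε)) = Ioo ε 1 := by
  have h_pos : 0 < 1 - ε := sub_pos.2 hε1
  ext t
  constructor
  · rintro ⟨u, hu, rfl⟩
    rw [mem_Ioi, div_lt_iff₀ h_pos] at hu
    have hu0 : 0 < 1 + u := by nlinarith
    simp only [mem_Ioo]
    rw [lt_div_iff₀ hu0, div_lt_one hu0]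
    constructor <;> linarith
  · rintro ⟨htε, ht1⟩
    have ht : 0 < 1 - t := sub_pos.2 ht1
    refine ⟨t / (1 - t), ?_, ?_⟩
    · rw [mem_Ioi, div_lt_div_iff₀ h_pos ht]
      linarith
    · field_simp
      ring

lemma integral_Ioo_one_sub_rpow_mul_rpow (hε0 : 0 < ε) (hε1 : ε < 1) (p q : ℝ) :
    ∫ t in Ioo ε 1, (1 - t) ^ p * t ^ q =
      ∫ u in Ioi (ε / (1 - ε)), (1 + u) ^ (-p - q - 2) * u ^ q := by
  have h_lower : 0 < ε / (1 - ε) := div_pos hε0 (sub_pos.2 hε1)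
  have h_deriv : ∀ u ∈ Ioi (ε / (1 - ε)),
      HasDerivWithinAt (fun u : ℝ => u / (1 + u)) ((1 + u) ^ 2)⁻¹ (Ioi (ε / (1 - ε))) u := by
    intro u hu
    have h_add : 1 + u ≠ 0 := (by linarith [h_lower.trans hu] : 0 < 1 + u).ne'
    refine HasDerivAt.hasDerivWithinAt ?_
    convert! (hasDerivAt_id u).div ((hasDerivAt_id u).const_add 1) h_add using 1
    simp
  have h_inj : InjOn (fun u : ℝ => u / (1 + u)) (Ioi (ε / (1 - ε))) := by
    intro u hu v hv huv
    have hu0 : 1 + u ≠ 0 := (by linarith [h_lower.trans hu] : 0 < 1 + u).ne'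
    have hv0 : 1 + v ≠ 0 := (by linarith [h_lower.trans hv] : 0 < 1 + v).ne'
    simp only [div_eq_div_iff hu0 hv0] at huv
    linarith
  rw [← image_div_one_add_Ioi hε0 hε1,
    integral_image_eq_integral_abs_deriv_smul measurableSet_Ioi h_deriv h_inj]
  refine setIntegral_congr_fun measurableSet_Ioi fun u hu => ?_
  have hu0 : 0 < u := h_lower.trans hu
  have h_add : 0 < 1 + u := by linarith
  have h_sub : 1 - u / (1 + u) = (1 + u)⁻¹ := by field_simp; ring
  have h_two : (1 + u) ^ (2 : ℝ) = (1 + u) ^ 2 := Real.rpow_two _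
  simp only [smul_eq_mul]
  rw [abs_of_pos (by positivity), h_sub, Real.inv_rpow h_add.le, Real.div_rpow hu0.le h_add.le,
    Real.rpow_sub h_add, Real.rpow_sub h_add, Real.rpow_neg h_add.le, h_two]
  field_simp

variable {s : ℝ}

lemma integral_Ioi_one_add_rpow_mul_rpow_neg (hs : 0 < s) (hc : 0 < c) :
    ∫ t in Ioi c, (1 + t) ^ s * t ^ (-(1 + 2 * s)) = (1 + c) ^ s * c ^ (-(2 * s)) / (2 * s) +
      (∫ t in Ioi c, (1 + t) ^ (s - 1) * t ^ (-(2 * s))) / 2 := by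
  have h := integral_Ioi_one_add_rpow_mul_rpow_by_parts (p := s) (q := -(2 * s)) (by linarith) hc
  rw [show -(2 * s) - 1 = -(1 + 2 * s) by ring] at h
  field_simp
  linarith

lemma integral_Ioo_one_sub_rpow_mul_rpow_neg (hs : 0 < s) (hε0 : 0 < ε) (hε1 : ε < 1) :
    ∫ t in Ioo ε 1, (1 - t) ^ s * t ^ (-(1 + 2 * s)) =
      (1 - ε) ^ s * ε ^ (-(2 * s)) / (2 * s) -
        (∫ t in Ioi (ε / (1 - ε)), (1 + t) ^ (s - 1) * t ^ (-(2 * s))) / 2 := by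
  have h_sub : 0 < 1 - ε := sub_pos.2 hε1
  have hδ : 0 < ε / (1 - ε) := div_pos hε0 h_sub
  have h_split : ∀ t ∈ Ioi (ε / (1 - ε)),
      (1 + t) ^ (-s - -(1 + 2 * s) - 2) * t ^ (-(1 + 2 * s)) =
        (1 + t) ^ s * t ^ (-(1 + 2 * s)) - (1 + t) ^ (s - 1) * t ^ (-(2 * s)) := by
    intro t ht
    have ht0 : 0 < t := hδ.trans ht
    have h_add : 0 < 1 + t := by linarith
    have h_t : t ^ (-(2 * s)) = t * t ^ (-(1 + 2 * s)) := by
      rw [← Real.rpow_one_add' ht0.le (by linarith)]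
      ring_nf
    rw [show -s - -(1 + 2 * s) - 2 = s - 1 by ring, h_t, Real.rpow_sub_one h_add.ne']
    field_simp
    ring
  have h_boundary : (1 + ε / (1 - ε)) ^ s * (ε / (1 - ε)) ^ (-(2 * s)) =
      (1 - ε) ^ s * ε ^ (-(2 * s)) := by
    have h_inv : 1 + ε / (1 - ε) = (1 - ε)⁻¹ := by field_simp; ring
    have h_two : (1 - ε) ^ (2 * s) = (1 - ε) ^ s * (1 - ε) ^ s := by
      rw [two_mul, Real.rpow_add h_sub]
    rw [h_inv, Real.inv_rpow h_sub.le, Real.div_rpow hε0.le h_sub.le, Real.rpow_neg h_sub.le, h_two]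
    field_simp
  rw [integral_Ioo_one_sub_rpow_mul_rpow hε0 hε1, setIntegral_congr_fun measurableSet_Ioi h_split,
    integral_sub (integrableOn_one_add_rpow_mul_rpow_Ioi (by linarith) hδ)
      (integrableOn_one_add_rpow_mul_rpow_Ioi (by linarith) hδ),
    integral_Ioi_one_add_rpow_mul_rpow_neg hs hδ, h_boundary]
  ring

end TruncatedIntegral

section Integrability

lemma integrableOn_Ioi_min_rpow {A B p q : ℝ} (hA : 0 ≤ A) (hB : 0 ≤ B) (hp : -1 < p)
    (hq : q < -1) : IntegrableOn (fun r : ℝ => min (A * r ^ p) (B * r ^ q)) (Ioi 0) := by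
  have h_meas : Measurable fun r : ℝ => min (A * r ^ p) (B * r ^ q) := by fun_prop
  have h_norm {r : ℝ} (hr : 0 < r) :
      ‖min (A * r ^ p) (B * r ^ q)‖ = min (A * r ^ p) (B * r ^ q) :=
    Real.norm_of_nonneg (by positivity)
  rw [← Ioc_union_Ioi_eq_Ioi zero_le_one]
  refine IntegrableOn.union ?_ ?_
  · have h_int : IntegrableOn (fun r : ℝ => A * r ^ p) (Ioc 0 1) :=
      ((intervalIntegrable_iff_integrableOn_Ioc_of_le zero_le_one).1
        (intervalIntegral.intervalIntegrable_rpow' hp)).const_mul A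
    refine h_int.mono' h_meas.aestronglyMeasurable ?_
    filter_upwards [ae_restrict_mem measurableSet_Ioc] with r hr
    exact (h_norm hr.1).trans_le (min_le_left _ _)
  · refine ((integrableOn_Ioi_rpow_of_lt hq one_pos).const_mul B).mono'
      h_meas.aestronglyMeasurable ?_
    filter_upwards [ae_restrict_mem measurableSet_Ioi] with r hr
    exact (h_norm (one_pos.trans hr)).trans_le (min_le_right _ _)

lemma pow_pred_mul_rpow_neg {r : ℝ} (hr : 0 < r) {d : ℕ} (hd : 0 < d) (s : ℝ) :
    r ^ (d - 1) * r ^ (-(d + 2 * s)) = r ^ (-(1 + 2 * s)) := by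
  rw [← Real.rpow_natCast, ← Real.rpow_add hr, Nat.cast_pred hd]
  ring_nf

variable {E : Type*} [NormedAddCommGroup E] [NormedSpace ℝ E] [FiniteDimensional ℝ E]
  [MeasurableSpace E] [BorelSpace E]

lemma integrable_secondDiff_posPartRpow_one [Nontrivial E] (μ : Measure E) [μ.IsAddHaarMeasure]
    (ℓ : E →L[ℝ] ℝ) {s : ℝ} (hs0 : 0 < s) (hs1 : s < 1) :
    Integrable
      (fun y => secondDiff (posPartRpow s) 1 (ℓ y) * ‖y‖ ^ (-(finrank ℝ E + 2 * s))) μ := by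
  have h_radial : Integrable (fun y : E => min (2 * (‖ℓ‖ * ‖y‖) ^ (2 : ℝ)) (2 * (‖ℓ‖ * ‖y‖) ^ s) *
      ‖y‖ ^ (-(finrank ℝ E + 2 * s))) μ := by
    refine (integrable_fun_norm_addHaar μ (f := fun r =>
      min (2 * (‖ℓ‖ * r) ^ (2 : ℝ)) (2 * (‖ℓ‖ * r) ^ s) * r ^ (-(finrank ℝ E + 2 * s)))).2 ?_
    refine (integrableOn_Ioi_min_rpow (A := 2 * ‖ℓ‖ ^ (2 : ℝ)) (B := 2 * ‖ℓ‖ ^ s) (p := 1 - 2 * s)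
      (q := -1 - s) (by positivity) (by positivity) (by linarith) (by linarith)).congr_fun
      (fun r (hr : 0 < r) => ?_) measurableSet_Ioi
    simp only [smul_eq_mul]
    rw [mul_left_comm, pow_pred_mul_rpow_neg hr finrank_pos, min_mul_of_nonneg _ _ (by positivity),
      Real.mul_rpow (norm_nonneg _) hr.le, Real.mul_rpow (norm_nonneg _) hr.le,
      show 1 - 2 * s = 2 + -(1 + 2 * s) by ring, show -1 - s = s + -(1 + 2 * s) by ring,
      Real.rpow_add hr, Real.rpow_add hr]
    simp only [mul_assoc]
  refine h_radial.mono' (by fun_prop) (.of_forall fun y => ?_)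
  rw [norm_mul, Real.norm_eq_abs, Real.norm_of_nonneg (by positivity)]
  gcongr ?_ * _
  refine (abs_secondDiff_posPartRpow_one_le_min hs0.le hs1.le (ℓ y)).trans ?_
  gcongr <;> exact ℓ.le_opNorm y

lemma integrableOn_Ioi_secondDiff_posPartRpow_one {s : ℝ} (hs0 : 0 < s) (hs1 : s < 1) :
    IntegrableOn (fun t => secondDiff (posPartRpow s) 1 t * t ^ (-(1 + 2 * s))) (Ioi 0) := by
  have h := integrable_secondDiff_posPartRpow_one volume (.id ℝ ℝ) hs0 hs1
  refine h.integrableOn.congr_fun (fun t (ht : 0 < t) => ?_) measurableSet_Ioi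
  simp [abs_of_pos ht]

end Integrability

section OneDimensional

variable {s ε : ℝ}

lemma integral_Ioi_posPartRpow_one_sub (hs : s ≠ 0) (ε q : ℝ) :
    ∫ t in Ioi ε, posPartRpow s (1 - t) * t ^ q = ∫ t in Ioo ε 1, (1 - t) ^ s * t ^ q := by
  have h_zero : ∀ t ∈ Ioi ε \ Ioo ε 1, posPartRpow s (1 - t) * t ^ q = 0 := by
    rintro t ⟨htε, ht⟩
    have ht1 : 1 - t ≤ 0 := sub_nonpos.2 (not_lt.1 fun h => ht ⟨htε, h⟩)
    rw [posPartRpow, max_eq_right ht1, Real.zero_rpow hs, zero_mul]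
  rw [setIntegral_eq_of_subset_of_forall_sdiff_eq_zero measurableSet_Ioi Ioo_subset_Ioi_self h_zero]
  refine setIntegral_congr_fun measurableSet_Ioo fun t ht => ?_
  simp only [posPartRpow_of_nonneg (sub_nonneg.2 ht.2.le)]

lemma integral_Ioi_secondDiff_posPartRpow_one_eq_boundary (hs0 : 0 < s) (hs1 : s < 1) (hε0 : 0 < ε)
    (hε1 : ε < 1) :
    ∫ t in Ioi ε, secondDiff (posPartRpow s) 1 t * t ^ (-(1 + 2 * s)) =
      secondDiff (posPartRpow s) 1 ε * ε ^ (-(2 * s)) / (2 * s) +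
        (∫ t in ε..ε / (1 - ε), (1 + t) ^ (s - 1) * t ^ (-(2 * s))) / 2 := by
  have h_add : IntegrableOn (fun t : ℝ => (1 + t) ^ s * t ^ (-(1 + 2 * s))) (Ioi ε) :=
    integrableOn_one_add_rpow_mul_rpow_Ioi (by linarith) hε0
  have h_two : IntegrableOn (fun t : ℝ => 2 * t ^ (-(1 + 2 * s))) (Ioi ε) :=
    (integrableOn_Ioi_rpow_of_lt (by linarith) hε0).const_mul 2
  have h_total : IntegrableOn (fun t => secondDiff (posPartRpow s) 1 t * t ^ (-(1 + 2 * s)))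
      (Ioi ε) :=
    (integrableOn_Ioi_secondDiff_posPartRpow_one hs0 hs1).mono_set (Ioi_subset_Ioi hε0.le)
  have h_sub : ∫ t in Ioi ε, posPartRpow s (1 - t) * t ^ (-(1 + 2 * s)) =
      (∫ t in Ioi ε, secondDiff (posPartRpow s) 1 t * t ^ (-(1 + 2 * s))) -
        (∫ t in Ioi ε, (1 + t) ^ s * t ^ (-(1 + 2 * s))) +
        ∫ t in Ioi ε, 2 * t ^ (-(1 + 2 * s)) := by
    rw [← integral_sub h_total h_add, ← integral_add (h_total.fun_sub h_add) h_two]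
    refine setIntegral_congr_fun measurableSet_Ioi fun t (ht : ε < t) => ?_
    simp only [secondDiff_posPartRpow_one (by linarith : -1 ≤ t)]
    ring
  have h_const : ∫ t in Ioi ε, 2 * t ^ (-(1 + 2 * s)) = 2 * ε ^ (-(2 * s)) / (2 * s) := by
    rw [integral_const_mul, integral_Ioi_rpow_of_lt (by linarith) hε0,
      show -(1 + 2 * s) + 1 = -(2 * s) by ring]
    field_simp
  have h_tail : (∫ t in Ioi ε, (1 + t) ^ (s - 1) * t ^ (-(2 * s))) -
      (∫ t in Ioi (ε / (1 - ε)), (1 + t) ^ (s - 1) * t ^ (-(2 * s))) =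
        ∫ t in ε..ε / (1 - ε), (1 + t) ^ (s - 1) * t ^ (-(2 * s)) :=
    intervalIntegral.integral_Ioi_sub_Ioi
      (integrableOn_one_add_rpow_mul_rpow_Ioi (by linarith) hε0)
      (le_div_self hε0.le (sub_pos.2 hε1) (by linarith))
  rw [integral_Ioi_posPartRpow_one_sub hs0.ne', integral_Ioo_one_sub_rpow_mul_rpow_neg hs0 hε0 hε1,
    integral_Ioi_one_add_rpow_mul_rpow_neg hs0 hε0, h_const] at h_sub
  rw [← h_tail, secondDiff_posPartRpow_one (by linarith),
    posPartRpow_of_nonneg (sub_nonneg.2 hε1.le)]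
  linear_combination -h_sub

lemma tendsto_const_mul_rpow_nhdsGT_zero (C : ℝ) {a : ℝ} (ha : 0 < a) :
    Tendsto (fun ε : ℝ => C * ε ^ a) (𝓝[>] 0) (𝓝 0) := by
  have h := (Real.continuousAt_rpow_const 0 a (Or.inr ha.le)).tendsto.const_mul C
  rw [Real.zero_rpow ha.ne', mul_zero] at h
  exact h.mono_left nhdsWithin_le_nhds

lemma tendsto_secondDiff_posPartRpow_one_mul_rpow (hs0 : 0 ≤ s) (hs1 : s < 1) :
    Tendsto (fun ε => secondDiff (posPartRpow s) 1 ε * ε ^ (-(2 * s))) (𝓝[>] 0) (𝓝 0) := by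
  refine squeeze_zero_norm' ?_ (tendsto_const_mul_rpow_nhdsGT_zero 2 (by linarith : 0 < 2 - 2 * s))
  filter_upwards [Ioc_mem_nhdsGT one_pos] with ε hε
  have h_rpow : ε ^ (2 - 2 * s) = ε ^ 2 * ε ^ (-(2 * s)) := by
    rw [sub_eq_add_neg, Real.rpow_add hε.1, Real.rpow_two]
  have h_pos : 0 ≤ ε ^ (-(2 * s)) := Real.rpow_nonneg hε.1.le _
  rw [norm_mul, Real.norm_of_nonneg h_pos, h_rpow, ← mul_assoc]
  gcongr
  exact abs_secondDiff_posPartRpow_one_le_sq hs0 hs1.le ((abs_of_pos hε.1).trans_le hε.2)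

lemma tendsto_integral_one_add_rpow_mul_rpow (hs0 : 0 ≤ s) (hs1 : s < 1) :
    Tendsto (fun ε => ∫ t in ε..ε / (1 - ε), (1 + t) ^ (s - 1) * t ^ (-(2 * s))) (𝓝[>] 0)
      (𝓝 0) := by
  refine squeeze_zero_norm' ?_ (tendsto_const_mul_rpow_nhdsGT_zero 2 (by linarith : 0 < 2 - 2 * s))
  filter_upwards [Ioc_mem_nhdsGT (one_half_pos (α := ℝ))] with ε ⟨hε0, hε⟩
  have h_sub : 0 < 1 - ε := by linarith
  have hεδ : ε ≤ ε / (1 - ε) := le_div_self hε0.le h_sub (by linarith)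
  have h_bound : ∀ t ∈ uIoc ε (ε / (1 - ε)),
      ‖(1 + t) ^ (s - 1) * t ^ (-(2 * s))‖ ≤ ε ^ (-(2 * s)) := by
    intro t ht
    rw [uIoc_of_le hεδ] at ht
    have ht0 : 0 < t := hε0.trans ht.1
    rw [Real.norm_of_nonneg (by positivity)]
    calc (1 + t) ^ (s - 1) * t ^ (-(2 * s)) ≤ 1 * t ^ (-(2 * s)) := by
          gcongr
          exact Real.rpow_le_one_of_one_le_of_nonpos (by linarith) (by linarith)
      _ ≤ ε ^ (-(2 * s)) := by
          rw [one_mul]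
          exact Real.rpow_le_rpow_of_nonpos hε0 ht.1.le (by linarith)
  have h_length : |ε / (1 - ε) - ε| ≤ 2 * ε ^ 2 := by
    rw [abs_of_nonneg (sub_nonneg.2 hεδ), sub_le_iff_le_add, div_le_iff₀ h_sub]
    nlinarith
  calc _ ≤ ε ^ (-(2 * s)) * |ε / (1 - ε) - ε| :=
        intervalIntegral.norm_integral_le_of_norm_le_const h_bound
    _ ≤ ε ^ (-(2 * s)) * (2 * ε ^ 2) := by gcongr
    _ = 2 * ε ^ (2 - 2 * s) := by
        rw [sub_eq_add_neg, Real.rpow_add hε0, Real.rpow_two]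
        ring

lemma integral_Ioi_secondDiff_posPartRpow_one (hs0 : 0 < s) (hs1 : s < 1) :
    ∫ t in Ioi 0, secondDiff (posPartRpow s) 1 t * t ^ (-(1 + 2 * s)) = 0 := by
  have h_cover : AECover (volume.restrict (Ioi (0 : ℝ))) (𝓝[>] 0) fun ε => Ioi ε :=
    aecover_Ioi_of_Ioi (tendsto_id.mono_left nhdsWithin_le_nhds)
  have h_lim := h_cover.integral_tendsto_of_countably_generated
    (integrableOn_Ioi_secondDiff_posPartRpow_one hs0 hs1)
  have h_zero := ((tendsto_secondDiff_posPartRpow_one_mul_rpow hs0.le hs1).div_const (2 * s)).add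
    ((tendsto_integral_one_add_rpow_mul_rpow hs0.le hs1).div_const 2)
  simp only [zero_div, add_zero] at h_zero
  refine tendsto_nhds_unique (h_lim.congr' ?_) h_zero
  filter_upwards [Ioo_mem_nhdsGT one_pos] with ε ⟨hε0, hε1⟩
  rw [Measure.restrict_restrict_of_subset (Ioi_subset_Ioi hε0.le),
    integral_Ioi_secondDiff_posPartRpow_one_eq_boundary hs0 hs1 hε0 hε1]

lemma integral_Ioi_secondDiff_posPartRpow_one_mul_left (hs0 : 0 < s) (hs1 : s < 1) (b : ℝ) :
    ∫ r in Ioi 0, secondDiff (posPartRpow s) 1 (r * b) * r ^ (-(1 + 2 * s)) = 0 := by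
  rcases eq_or_ne b 0 with rfl | hb
  · simp only [mul_zero, secondDiff_zero_right, zero_mul, integral_zero]
  have hb0 : 0 < |b| := abs_pos.2 hb
  have h_scale : ∀ r ∈ Ioi (0 : ℝ), secondDiff (posPartRpow s) 1 (r * b) * r ^ (-(1 + 2 * s)) =
      |b| ^ (1 + 2 * s) *
        (secondDiff (posPartRpow s) 1 (|b| * r) * (|b| * r) ^ (-(1 + 2 * s))) := by
    intro r (hr : 0 < r)
    rw [← secondDiff_abs, abs_mul, abs_of_pos hr, Real.mul_rpow hb0.le hr.le, Real.rpow_neg hb0.le,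
      mul_comm r]
    field_simp
  rw [setIntegral_congr_fun measurableSet_Ioi h_scale, integral_const_mul,
    integral_comp_mul_left_Ioi
      (fun t => secondDiff (posPartRpow s) 1 t * t ^ (-(1 + 2 * s))) _ hb0,
    mul_zero, integral_Ioi_secondDiff_posPartRpow_one hs0 hs1, smul_zero, mul_zero]

end OneDimensional

section HalfSpace

lemma integral_volumeIoiPow {F : Type*} [NormedAddCommGroup F] [NormedSpace ℝ F] (n : ℕ)
    (g : ℝ → F) :
    ∫ r : Ioi (0 : ℝ), g r ∂.volumeIoiPow n = ∫ r in Ioi (0 : ℝ), r ^ n • g r := by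
  simp only [Measure.volumeIoiPow, ENNReal.ofReal]
  rw [integral_withDensity_eq_integral_smul (measurable_subtype_coe.pow_const _).real_toNNReal,
    integral_subtype_comap measurableSet_Ioi fun r : ℝ => Real.toNNReal (r ^ n) • g r]
  refine setIntegral_congr_fun measurableSet_Ioi fun r (hr : 0 < r) => ?_
  simp only [NNReal.smul_def, Real.coe_toNNReal _ (pow_nonneg hr.le _)]

variable {E : Type*} [NormedAddCommGroup E] [NormedSpace ℝ E] [FiniteDimensional ℝ E]
  [MeasurableSpace E] [BorelSpace E] (μ : Measure E) [μ.IsAddHaarMeasure]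

lemma integral_eq_integral_toSphere_integral_Ioi [Nontrivial E] {F : Type*} [NormedAddCommGroup F]
    [NormedSpace ℝ F] {f : E → F} (hf : Integrable f μ) :
    ∫ y, f y ∂μ =
      ∫ v : sphere (0 : E) 1, (∫ r in Ioi (0 : ℝ), r ^ (finrank ℝ E - 1) • f (r • (v : E)))
        ∂μ.toSphere := by
  have h_polar : MeasurePreserving (homeomorphUnitSphereProd E).symm
      (μ.toSphere.prod (.volumeIoiPow (finrank ℝ E - 1))) (μ.comap (↑)) :=
    μ.measurePreserving_homeomorphUnitSphereProd.symm
      (homeomorphUnitSphereProd E).toMeasurableEquiv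
  have h_emb := (homeomorphUnitSphereProd E).symm.measurableEmbedding
  have h_int : Integrable (fun p => f ((homeomorphUnitSphereProd E).symm p))
      (μ.toSphere.prod (.volumeIoiPow (finrank ℝ E - 1))) := by
    refine (h_polar.integrable_comp_emb h_emb (g := fun y => f y)).2 ?_
    exact (integrableOn_iff_comap_subtypeVal (measurableSet_singleton _).compl).1 hf.integrableOn
  calc ∫ y, f y ∂μ = ∫ p, f ((homeomorphUnitSphereProd E).symm p)
        ∂μ.toSphere.prod (.volumeIoiPow (finrank ℝ E - 1)) := by
        rw [h_polar.integral_comp h_emb fun y => f y,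
          integral_subtype_comap (measurableSet_singleton _).compl, restrict_compl_singleton]
    _ = ∫ v : sphere (0 : E) 1, (∫ r : Ioi (0 : ℝ), f ((r : ℝ) • (v : E))
        ∂.volumeIoiPow (finrank ℝ E - 1)) ∂μ.toSphere := integral_prod _ h_int
    _ = _ := integral_congr_ae <| .of_forall fun v =>
        integral_volumeIoiPow _ fun r => f (r • (v : E))

lemma integral_secondDiff_posPartRpow_one [Nontrivial E] (ℓ : E →L[ℝ] ℝ) {s : ℝ} (hs0 : 0 < s)
    (hs1 : s < 1) :
    ∫ y, secondDiff (posPartRpow s) 1 (ℓ y) * ‖y‖ ^ (-(finrank ℝ E + 2 * s)) ∂μ = 0 := by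
  rw [integral_eq_integral_toSphere_integral_Ioi μ
    (integrable_secondDiff_posPartRpow_one μ ℓ hs0 hs1)]
  refine integral_eq_zero_of_ae (.of_forall fun v => ?_)
  refine (setIntegral_congr_fun measurableSet_Ioi fun r (hr : 0 < r) => ?_).trans
    (integral_Ioi_secondDiff_posPartRpow_one_mul_left hs0 hs1 (ℓ v))
  have h_norm : ‖r • (v : E)‖ = r := by simp [norm_smul, abs_of_pos hr]
  simp only [h_norm, map_smul, smul_eq_mul]
  rw [mul_left_comm, pow_pred_mul_rpow_neg hr finrank_pos]

theorem stmt7_general (ℓ : E →L[ℝ] ℝ) {s : ℝ} (hs0 : 0 < s) (hs1 : s < 1) {x : E} (hx : 0 < ℓ x) :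
    Integrable (fun y => secondDiff (fun z => posPartRpow s (ℓ z)) x y *
        ‖y‖ ^ (-(finrank ℝ E + 2 * s))) μ ∧
      ∫ y, secondDiff (fun z => posPartRpow s (ℓ z)) x y *
        ‖y‖ ^ (-(finrank ℝ E + 2 * s)) ∂μ = 0 := by
  have : Nontrivial E := ⟨x, 0, fun h => hx.ne' (by rw [h, map_zero])⟩
  have h_scale (y : E) := secondDiff_posPartRpow_comp (ℓ : E →ₗ[ℝ] ℝ) s hx y
  simp only [ContinuousLinearMap.coe_coe] at h_scale
  simp only [h_scale, mul_assoc]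
  refine ⟨(integrable_secondDiff_posPartRpow_one μ ((ℓ x)⁻¹ • ℓ) hs0 hs1).const_mul _, ?_⟩
  rw [integral_const_mul]
  exact mul_eq_zero_of_right _ (integral_secondDiff_posPartRpow_one μ ((ℓ x)⁻¹ • ℓ) hs0 hs1)

end HalfSpace

end

/-- The function `w_s(x) = (x_N)₊^s` is `s`-harmonic in the upper half-space: the
second-difference integral defining `(-Δ)^s w_s` vanishes at every point with `x_N > 0`. -/
theorem stmt7 (n : ℕ) (s : ℝ) (hs0 : 0 < s) (hs1 : s < 1)
    (x : EuclideanSpace ℝ (Fin (n + 1))) (hx : 0 < x (Fin.last n)) :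
    (∫ y : EuclideanSpace ℝ (Fin (n + 1)),
        (max ((x + y) (Fin.last n)) 0 ^ s + max ((x - y) (Fin.last n)) 0 ^ s -
            2 * max (x (Fin.last n)) 0 ^ s) * ‖y‖ ^ (-((n + 1 : ℝ) + 2 * s))) = 0 := by
  simpa [secondDiff, posPartRpow] using
    (stmt7_general volume (EuclideanSpace.proj (Fin.last n)) hs0 hs1 hx).2
end

section
/- Let 0 < s < 1, (2s-1)₊ < α < 2s, ψ ∈ C²_c(ℝ^N), v_α(x) = (x_N)₊^α ψ(x), and let a ∈ L^∞(𝕊^{N-1}) be nonnegative and even. Suppose u ∈ C²(ℝ^N_+), u is locally C² up to the boundary of ℝ^N_+, u = 0 on the closed lower half-space, and |u(x)| ≤ β(1 + |x|^{2s-δ}) for some δ ∈ (0,2s]. Then ∫_{ℝ^N} u · Lv_α dx = ∫_{ℝ^N} v_α · Lu dx, both integrals being absolutely convergent. -/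
open MeasureTheory

/-!
Write `D²f(x, y) = f(x + y) + f(x - y) - 2 f(x)`, let `K` be the kernel of `L`, of order `σ = 2s` in
dimension `d`, and let `ℓ(x) = x_N`. The two sides are the double integrals of `u(x) D²v(x, y) K(y)`
and `v(x) D²u(x, y) K(y)`. For fixed `y` their `x`-integrals agree by translation invariance, so by
Fubini it suffices that both integrands are absolutely integrable.

For `|y| ≥ 1` each integrand is controlled by moving the weight onto `u`: if `z` is at distance at
most `|y|` from the support of `v`, then `|K(y)| ≲ (1 + |z|) ^ (-(d + σ))`.

For `|y| < 1` let `q = min α σ`, so that locally `|u| ≲ 1` and `|v| ≲ ℓ ^ q` on the half-space. Both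
products are then `≲ ℓ(x) ^ (q - κ) |y| ^ κ` for every `κ ∈ [q, 2]`: when `|y|` is small compared to
`ℓ(x)`, the second difference gains the factor `(|y| / ℓ(x)) ^ 2 ≲ (|y| / ℓ(x)) ^ κ`; otherwise the
pointwise bounds at the points involved give `≲ |y| ^ q ≲ ℓ(x) ^ (q - κ) |y| ^ κ`. This dominating
function times `K` is integrable when `σ < κ < q + 1`, and such a `κ ≤ 2` exists because
`σ - 1 < q` and `σ < 2`.
-/

open Metric Module Set

section SecondDifference

/-- The symmetric second difference `D²f(x, y)` of `f` at `x` with step `y`, which the nonlocal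
operator integrates against its kernel. -/
def symmSecondDiff {E : Type*} [AddGroup E] (f : E → ℝ) (x y : E) : ℝ :=
  f (x + y) + f (x - y) - 2 * f x

theorem symmSecondDiff_mul {E : Type*} [AddGroup E] (f g : E → ℝ) (x y : E) :
    symmSecondDiff (fun z => f z * g z) x y =
      f x * symmSecondDiff g x y + g x * symmSecondDiff f x y +
        (f (x + y) - f x) * (g (x + y) - g x) + (f (x - y) - f x) * (g (x - y) - g x) := by
  simp only [symmSecondDiff]
  ring

theorem abs_symmSecondDiff_le_four_mul {E : Type*} [AddGroup E] {f : E → ℝ} {x y : E} {C : ℝ}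
    (hadd : |f (x + y)| ≤ C) (hsub : |f (x - y)| ≤ C) (h : |f x| ≤ C) :
    |symmSecondDiff f x y| ≤ 4 * C := by
  rw [symmSecondDiff, abs_le]
  constructor <;> linarith [abs_le.1 hadd, abs_le.1 hsub, abs_le.1 h]

theorem measurable_uncurry_symmSecondDiff {E : Type*} [AddGroup E] [MeasurableSpace E]
    [MeasurableAdd₂ E] [MeasurableSub₂ E] {f : E → ℝ} (hf : Measurable f) :
    Measurable fun z : E × E => symmSecondDiff f z.1 z.2 := by
  unfold symmSecondDiff
  fun_prop

section Calculus

variable {E : Type*} [NormedAddCommGroup E] [NormedSpace ℝ E] {f : E → ℝ} {x y : E} {M : ℝ}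

theorem abs_sub_le_of_norm_fderiv_le (hf : ∀ z ∈ closedBall x ‖y‖, DifferentiableAt ℝ f z)
    (hM : ∀ z ∈ closedBall x ‖y‖, ‖fderiv ℝ f z‖ ≤ M) :
    |f (x + y) - f x| ≤ M * ‖y‖ ∧ |f (x - y) - f x| ≤ M * ‖y‖ := by
  have hx : x ∈ closedBall x ‖y‖ := mem_closedBall_self (norm_nonneg y)
  constructor
  · simpa using (convex_closedBall x ‖y‖).norm_image_sub_le_of_norm_fderiv_le hf hM hx
      (y := x + y) (by simp)
  · simpa using (convex_closedBall x ‖y‖).norm_image_sub_le_of_norm_fderiv_le hf hM hx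
      (y := x - y) (by simp)

theorem abs_symmSecondDiff_le (hf : ∀ z ∈ closedBall x ‖y‖, ContDiffAt ℝ 2 f z)
    (hM : ∀ z ∈ closedBall x ‖y‖, ‖fderiv ℝ (fderiv ℝ f) z‖ ≤ M) :
    |symmSecondDiff f x y| ≤ 2 * M * ‖y‖ ^ 2 := by
  have hmem : ∀ h ∈ closedBall (0 : E) ‖y‖,
      x + h ∈ closedBall x ‖y‖ ∧ x - h ∈ closedBall x ‖y‖ := by
    intro h hh
    simpa [dist_eq_norm] using hh
  have hM0 : 0 ≤ M := le_trans (by positivity) (hM x (mem_closedBall_self (norm_nonneg y)))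
  have hf' : ∀ z ∈ closedBall x ‖y‖, HasFDerivAt f (fderiv ℝ f z) z := fun z hz =>
    ((hf z hz).differentiableAt two_ne_zero).hasFDerivAt
  have hsum : ∀ h ∈ closedBall (0 : E) ‖y‖,
      HasFDerivWithinAt (fun h => f (x + h) + f (x - h))
        (fderiv ℝ f (x + h) - fderiv ℝ f (x - h)) (closedBall 0 ‖y‖) h := by
    intro h hh
    have hadd : HasFDerivAt (fun h => f (x + h)) ((fderiv ℝ f (x + h)).comp (.id ℝ E)) h :=
      (hf' _ (hmem h hh).1).comp h ((hasFDerivAt_id h).const_add x)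
    have hsub : HasFDerivAt (fun h => f (x - h)) ((fderiv ℝ f (x - h)).comp (-.id ℝ E)) h :=
      (hf' _ (hmem h hh).2).comp h ((hasFDerivAt_id h).const_sub x)
    refine ((hadd.add hsub).congr_fderiv ?_).hasFDerivWithinAt
    ext z
    simp [sub_eq_add_neg]
  have hbound : ∀ h ∈ closedBall (0 : E) ‖y‖,
      ‖fderiv ℝ f (x + h) - fderiv ℝ f (x - h)‖ ≤ 2 * M * ‖y‖ := by
    intro h hh
    calc ‖fderiv ℝ f (x + h) - fderiv ℝ f (x - h)‖ ≤ M * ‖x + h - (x - h)‖ :=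
          (convex_closedBall x ‖y‖).norm_image_sub_le_of_norm_fderiv_le
            (fun z hz => ((hf z hz).fderiv_right (m := 1) le_rfl).differentiableAt one_ne_zero)
            hM (hmem h hh).2 (hmem h hh).1
      _ = M * ‖(2 : ℝ) • h‖ := by rw [two_smul]; congr 2; abel
      _ = 2 * M * ‖h‖ := by rw [norm_smul, Real.norm_ofNat]; ring
      _ ≤ 2 * M * ‖y‖ := by gcongr; simpa using hh
  calc |symmSecondDiff f x y| = ‖f (x + y) + f (x - y) - (f (x + 0) + f (x - 0))‖ := by
        rw [add_zero, sub_zero, ← two_mul, symmSecondDiff, Real.norm_eq_abs]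
    _ ≤ 2 * M * ‖y‖ * ‖y - 0‖ :=
        (convex_closedBall (0 : E) ‖y‖).norm_image_sub_le_of_norm_hasFDerivWithin_le hsum hbound
          (by simp) (by simp)
    _ = 2 * M * ‖y‖ ^ 2 := by rw [sub_zero]; ring

theorem exists_abs_add_norm_fderiv_le {K : Set E} (hK : IsCompact K)
    (hf : ∀ z ∈ K, ContDiffAt ℝ 2 f z) :
    ∃ M, ∀ z ∈ K, |f z| + ‖fderiv ℝ f z‖ + ‖fderiv ℝ (fderiv ℝ f) z‖ ≤ M := by
  have hcont : ContinuousOn (fun z => |f z| + ‖fderiv ℝ f z‖ + ‖fderiv ℝ (fderiv ℝ f) z‖) K := by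
    intro z hz
    have hf' : ContDiffAt ℝ 1 (fderiv ℝ f) z := (hf z hz).fderiv_right le_rfl
    have hf'' : ContDiffAt ℝ 0 (fderiv ℝ (fderiv ℝ f)) z := hf'.fderiv_right le_rfl
    have hcont'' : ContinuousAt (fun z => ‖fderiv ℝ (fderiv ℝ f) z‖) z :=
      (continuous_norm (E := E →L[ℝ] E →L[ℝ] ℝ)).continuousAt.comp hf''.continuousAt
    exact (((hf z hz).continuousAt.abs.add hf'.continuousAt.norm).add hcont'').continuousWithinAt
  obtain ⟨M, hM⟩ := hK.bddAbove_image hcont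
  exact ⟨M, fun z hz => hM (mem_image_of_mem _ hz)⟩

theorem exists_abs_one_add_rpow_sub_one_le (α : ℝ) : ∃ C, 0 ≤ C ∧ ∀ t : ℝ, |t| ≤ 1 / 2 →
    |(1 + t) ^ α - 1| ≤ C * |t| ∧ |(1 - t) ^ α - 1| ≤ C * |t| ∧
      |(1 + t) ^ α + (1 - t) ^ α - 2| ≤ C * t ^ 2 := by
  have hsmooth : ∀ z ∈ closedBall (1 : ℝ) (1 / 2), ContDiffAt ℝ 2 (fun t : ℝ => t ^ α) z := by
    intro z hz
    have hz0 : z ≠ 0 := by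
      rw [Real.closedBall_eq_Icc] at hz
      linarith [hz.1]
    exact contDiffAt_id.rpow_const_of_ne hz0
  obtain ⟨M, hM⟩ := exists_abs_add_norm_fderiv_le (isCompact_closedBall (1 : ℝ) (1 / 2)) hsmooth
  have hM0 : 0 ≤ M := le_trans (by positivity) (hM 1 (mem_closedBall_self (by norm_num)))
  refine ⟨2 * M, by positivity, fun t ht => ?_⟩
  have hsub : closedBall (1 : ℝ) ‖t‖ ⊆ closedBall 1 (1 / 2) := closedBall_subset_closedBall ht
  obtain ⟨hadd, hsub'⟩ := abs_sub_le_of_norm_fderiv_le (M := M)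
    (fun z hz => (hsmooth z (hsub hz)).differentiableAt two_ne_zero)
    (fun z hz => (le_add_of_nonneg_left (abs_nonneg _)).trans
      ((le_add_of_nonneg_right (by positivity)).trans (hM z (hsub hz))))
  have hsecond := abs_symmSecondDiff_le (fun z hz => hsmooth z (hsub hz))
    (fun z hz => (le_add_of_nonneg_left (by positivity)).trans (hM z (hsub hz)))
  simp only [symmSecondDiff, Real.one_rpow, mul_one, Real.norm_eq_abs, sq_abs]
    at hadd hsub' hsecond
  have hMt : M * |t| ≤ 2 * M * |t| := by nlinarith [abs_nonneg t]
  exact ⟨hadd.trans hMt, hsub'.trans hMt, hsecond⟩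

end Calculus

theorem integral_mul_symmSecondDiff_comm {E : Type*} [AddGroup E] [TopologicalSpace E]
    [IsTopologicalAddGroup E] [T2Space E] [MeasurableSpace E] [BorelSpace E] {μ : Measure E}
    [μ.IsAddRightInvariant] {u v : E → ℝ} (hu : LocallyIntegrable u μ) (hv : Continuous v)
    (hvc : HasCompactSupport v) (y : E) :
    ∫ x, u x * symmSecondDiff v x y ∂μ = ∫ x, v x * symmSecondDiff u x y ∂μ := by
  have hadd : Integrable (fun x => v (x + y) * u x) μ :=
    hu.integrable_smul_left_of_hasCompactSupport (hv.comp (continuous_add_const y))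
      (hvc.comp_homeomorph (Homeomorph.addRight y))
  have hsub : Integrable (fun x => v (x - y) * u x) μ :=
    hu.integrable_smul_left_of_hasCompactSupport (hv.comp (continuous_sub_right y))
      (hvc.comp_homeomorph (Homeomorph.subRight y))
  have hself : Integrable (fun x => 2 * (v x * u x)) μ :=
    (hu.integrable_smul_left_of_hasCompactSupport hv hvc).const_mul 2
  have hadd' : Integrable (fun x => v x * u (x - y)) μ := by simpa using hadd.comp_sub_right y
  have hsub' : Integrable (fun x => v x * u (x + y)) μ := by simpa using hsub.comp_add_right y
  have hpair : Integrable (fun x => v (x + y) * u x + v (x - y) * u x) μ := hadd.add hsub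
  have hpair' : Integrable (fun x => v x * u (x - y) + v x * u (x + y)) μ := hadd'.add hsub'
  calc ∫ x, u x * symmSecondDiff v x y ∂μ
      = ∫ x, v (x + y) * u x + v (x - y) * u x - 2 * (v x * u x) ∂μ := by
        congr with x
        simp only [symmSecondDiff]
        ring
    _ = ∫ x, v (x + y) * u x ∂μ + ∫ x, v (x - y) * u x ∂μ - ∫ x, 2 * (v x * u x) ∂μ := by
        rw [integral_sub hpair hself, integral_add hadd hsub]
    _ = ∫ x, v x * u (x - y) ∂μ + ∫ x, v x * u (x + y) ∂μ - ∫ x, 2 * (v x * u x) ∂μ := by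
        congr 2
        · simpa using integral_add_right_eq_self (μ := μ) (fun x => v x * u (x - y)) y
        · simpa using integral_sub_right_eq_self (μ := μ) (fun x => v x * u (x + y)) y
    _ = ∫ x, v x * u (x - y) + v x * u (x + y) - 2 * (v x * u x) ∂μ := by
        rw [integral_sub hpair' hself, integral_add hadd' hsub']
    _ = ∫ x, v x * symmSecondDiff u x y ∂μ := by
        congr with x
        simp only [symmSecondDiff]
        ring

end SecondDifference

section PowerWeights

theorem exists_continuousLinearEquiv_prod_ker {E : Type*} [NormedAddCommGroup E] [NormedSpace ℝ E]
    {ℓ : E →L[ℝ] ℝ} (hℓ : ℓ ≠ 0) : ∃ e : E ≃L[ℝ] ℝ × ℓ.ker, ∀ z, ℓ (e.symm z) = z.1 := by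
  have hsurj : Function.Surjective ℓ :=
    LinearMap.surjective (ContinuousLinearMap.coe_injective.ne hℓ)
  obtain ⟨g, hg⟩ := ℓ.exists_rightInverse_of_surjective (LinearMap.range_eq_top.2 hsurj)
  let e : E ≃L[ℝ] ℝ × ℓ.ker := .equivOfRightInverse ℓ g (DFunLike.congr_fun hg)
  exact ⟨e, fun z => congr_arg Prod.fst (e.apply_symm_apply z)⟩

variable {E : Type*} [NormedAddCommGroup E] [NormedSpace ℝ E] [FiniteDimensional ℝ E]
  [MeasurableSpace E] [BorelSpace E] {μ : Measure E} [μ.IsAddHaarMeasure]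

theorem integrableOn_norm_rpow_ball [Nontrivial E] {r : ℝ} (hr : -(finrank ℝ E : ℝ) < r) :
    IntegrableOn (fun x => ‖x‖ ^ r) (ball 0 1) μ := by
  rw [integrableOn_fun_norm_addHaar μ (f := fun t : ℝ => t ^ r)]
  have hradial := (intervalIntegral.integrableOn_Ioo_rpow_iff
    (s := (finrank ℝ E - 1 : ℝ) + r) zero_lt_one).2 (by linarith)
  refine hradial.congr_fun (fun t ht => ?_) measurableSet_Ioo
  have hcast : ((finrank ℝ E - 1 : ℕ) : ℝ) = finrank ℝ E - 1 := by
    rw [Nat.cast_sub finrank_pos, Nat.cast_one]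
  simp only [smul_eq_mul]
  rw [Real.rpow_add ht.1, ← hcast, Real.rpow_natCast]

theorem integrableOn_rpow_halfBall {ℓ : E →L[ℝ] ℝ} (hℓ : ℓ ≠ 0) {r : ℝ} (hr : -1 < r) (R : ℝ) :
    IntegrableOn (fun x => ℓ x ^ r) {x | 0 < ℓ x ∧ ‖x‖ ≤ R} μ := by
  obtain ⟨e, he⟩ := exists_continuousLinearEquiv_prod_ker hℓ
  have hemb : MeasurableEmbedding e.symm := e.symm.toHomeomorph.measurableEmbedding
  let P : Measure (ℝ × ℓ.ker) := volume.prod Measure.addHaar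
  have hP : (P.map e.symm).IsAddHaarMeasure := e.symm.isAddHaarMeasure_map P
  rw [Measure.isAddLeftInvariant_eq_smul μ (P.map e.symm), IntegrableOn, Measure.restrict_smul]
  refine Integrable.smul_measure_nnreal ?_
  rw [← IntegrableOn, hemb.integrableOn_map_iff]
  set B : ℝ := ‖(e : E →L[ℝ] ℝ × ℓ.ker)‖ * |R| + 1
  have hB : 0 < B := by positivity
  have hrpow : IntegrableOn (fun t : ℝ => t ^ r) (Ioo 0 B) :=
    (intervalIntegral.integrableOn_Ioo_rpow_iff hB).2 hr
  have hone : IntegrableOn (fun _ : ℓ.ker => (1 : ℝ)) (closedBall 0 B) Measure.addHaar :=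
    integrableOn_const measure_closedBall_lt_top.ne
  have hprod : IntegrableOn (fun z : ℝ × ℓ.ker => z.1 ^ r) (Ioo 0 B ×ˢ closedBall 0 B) P := by
    rw [IntegrableOn, ← Measure.prod_restrict]
    simpa only [mul_one] using hrpow.mul_prod hone
  simp only [Function.comp_def, he]
  refine hprod.mono_set fun z ⟨hz, hzR⟩ => ?_
  have hnorm : ‖z‖ < B := by
    calc ‖z‖ = ‖e (e.symm z)‖ := by rw [e.apply_symm_apply]
      _ ≤ ‖(e : E →L[ℝ] ℝ × ℓ.ker)‖ * ‖e.symm z‖ := (e : E →L[ℝ] ℝ × ℓ.ker).le_opNorm _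
      _ ≤ ‖(e : E →L[ℝ] ℝ × ℓ.ker)‖ * |R| := by gcongr; exact hzR.trans (le_abs_self R)
      _ < B := lt_add_one _
  refine ⟨⟨he z ▸ hz, ?_⟩, ?_⟩
  · exact (le_abs_self _).trans_lt ((norm_fst_le z).trans_lt hnorm)
  · simpa using (norm_snd_le z).trans hnorm.le

end PowerWeights

section Kernel

variable {E : Type*} [NormedAddCommGroup E] [NormedSpace ℝ E] [MeasurableSpace E]

/-- `K` is a (possibly signed) kernel of order `σ`: it is dominated by a multiple of
`‖y‖ ^ (-(d + σ))`, `d` being the dimension. Since `0 ^ r = 0` for `r ≠ 0`, this includes the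
harmless normalization `K 0 = 0` when `d + σ ≠ 0`. -/
structure IsKernelOfOrder (σ : ℝ) (K : E → ℝ) : Prop where
  measurable : Measurable K
  exists_abs_le : ∃ D, 0 ≤ D ∧ ∀ y, |K y| ≤ D * ‖y‖ ^ (-(finrank ℝ E + σ))

theorem isKernelOfOrder_norm_rpow_mul [OpensMeasurableSpace E] [MeasurableSMul₂ ℝ E] (σ : ℝ)
    {a : E → ℝ} {D : ℝ} (ha : Measurable a) (hD : ∀ θ, |a θ| ≤ D) :
    IsKernelOfOrder σ fun y => ‖y‖ ^ (-(finrank ℝ E + σ)) * a (‖y‖⁻¹ • y) where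
  measurable := by fun_prop
  exists_abs_le := by
    refine ⟨D, (abs_nonneg _).trans (hD 0), fun y => ?_⟩
    rw [abs_mul, abs_of_nonneg (by positivity), mul_comm]
    gcongr
    exact hD _

theorem norm_rpow_neg_le_one_add_norm_rpow_neg {F : Type*} [SeminormedAddGroup F] {y z : F}
    {R p : ℝ} (hR : 0 ≤ R) (hp : 0 ≤ p) (hy : 1 ≤ ‖y‖) (hz : ‖z‖ ≤ R + ‖y‖) :
    ‖y‖ ^ (-p) ≤ (2 + R) ^ p * (1 + ‖z‖) ^ (-p) := by
  have hle : 1 + ‖z‖ ≤ (2 + R) * ‖y‖ := by nlinarith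
  calc ‖y‖ ^ (-p) = (2 + R) ^ p * ((2 + R) * ‖y‖) ^ (-p) := by
        rw [Real.mul_rpow (by positivity) (by positivity), ← mul_assoc,
          ← Real.rpow_add (by positivity), add_neg_cancel, Real.rpow_zero, one_mul]
    _ ≤ (2 + R) ^ p * (1 + ‖z‖) ^ (-p) := mul_le_mul_of_nonneg_left
        (Real.rpow_le_rpow_of_nonpos (by positivity) hle (neg_nonpos.2 hp)) (by positivity)

namespace IsKernelOfOrder

variable {σ : ℝ} {K : E → ℝ}

theorem exists_abs_le_one_add_norm_rpow (hK : IsKernelOfOrder σ K) (hσ : 0 ≤ σ) {R : ℝ}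
    (hR : 0 ≤ R) : ∃ C, ∀ y z : E, 1 ≤ ‖y‖ → ‖z‖ ≤ R + ‖y‖ →
      |K y| ≤ C * (1 + ‖z‖) ^ (-(finrank ℝ E + σ)) := by
  obtain ⟨D, hD0, hD⟩ := hK.exists_abs_le
  refine ⟨D * (2 + R) ^ (finrank ℝ E + σ), fun y z hy hz => (hD y).trans ?_⟩
  rw [mul_assoc]
  gcongr
  exact norm_rpow_neg_le_one_add_norm_rpow_neg hR (by positivity) hy hz

variable [FiniteDimensional ℝ E] [BorelSpace E] {μ : Measure E} [μ.IsAddHaarMeasure]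

theorem integrableOn_norm_rpow_mul_ball [Nontrivial E] (hK : IsKernelOfOrder σ K) {κ : ℝ}
    (hκ : σ < κ) : IntegrableOn (fun y => ‖y‖ ^ κ * K y) (ball 0 1) μ := by
  obtain ⟨D, hD0, hD⟩ := hK.exists_abs_le
  have hdom : IntegrableOn (fun y => D * ‖y‖ ^ (κ + -(finrank ℝ E + σ))) (ball 0 1) μ :=
    (integrableOn_norm_rpow_ball (by linarith)).const_mul D
  have hmeas : Measurable fun y => ‖y‖ ^ κ * K y :=
    (measurable_norm.pow_const κ).mul hK.measurable
  refine hdom.mono' hmeas.aestronglyMeasurable (.of_forall fun y => ?_)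
  calc ‖‖y‖ ^ κ * K y‖ = ‖y‖ ^ κ * |K y| := by
        rw [norm_mul, Real.norm_of_nonneg (by positivity), Real.norm_eq_abs]
    _ ≤ ‖y‖ ^ κ * (D * ‖y‖ ^ (-(finrank ℝ E + σ))) := by gcongr; exact hD y
    _ = D * (‖y‖ ^ κ * ‖y‖ ^ (-(finrank ℝ E + σ))) := by ring
    _ ≤ D * ‖y‖ ^ (κ + -(finrank ℝ E + σ)) := by
        gcongr
        exact Real.le_rpow_add (norm_nonneg y) _ _

theorem integrableOn_compl_ball (hK : IsKernelOfOrder σ K) (hσ : 0 < σ) :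
    IntegrableOn K (ball 0 1)ᶜ μ := by
  obtain ⟨C, hC⟩ := hK.exists_abs_le_one_add_norm_rpow hσ.le le_rfl
  have hdom : Integrable (fun y => C * (1 + ‖y‖) ^ (-(finrank ℝ E + σ))) μ :=
    (integrable_one_add_norm (by linarith)).const_mul C
  refine hdom.integrableOn.mono' hK.measurable.aestronglyMeasurable ?_
  filter_upwards [ae_restrict_mem measurableSet_ball.compl] with y hy
  exact hC y y (by simpa using hy) (by rw [zero_add])

end IsKernelOfOrder

end Kernel

section HalfSpace

variable {E : Type*} [NormedAddCommGroup E] [NormedSpace ℝ E] {ℓ : E →L[ℝ] ℝ}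

/-- `f` is `C²` on the open half-space `{0 < ℓ}` and locally `C²` up to its boundary, in the sense
that its `C²` norm is bounded on the intersection of the half-space with any compact set. -/
structure IsC2UpToBoundary (ℓ : E →L[ℝ] ℝ) (f : E → ℝ) : Prop where
  contDiffOn : ContDiffOn ℝ 2 f {x | 0 < ℓ x}
  exists_le : ∀ K, IsCompact K → ∃ M, ∀ x ∈ K, 0 < ℓ x →
    |f x| + ‖fderiv ℝ f x‖ + ‖fderiv ℝ (fderiv ℝ f) x‖ ≤ M

/-- `f` vanishes outside the half-space `{0 < ℓ}`, and inside it `f` and its second differences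
behave like the power `ℓ ^ p` and its second derivatives: locally `|f| ≲ ℓ ^ p`, and
`|D²f(x, y)| ≲ ℓ(x) ^ (p - 2) |y|²` for steps `y` that stay well inside the half-space. -/
structure HasBoundaryOrder (ℓ : E →L[ℝ] ℝ) (p : ℝ) (f : E → ℝ) : Prop where
  eq_zero : ∀ x, ℓ x ≤ 0 → f x = 0
  exists_abs_le : ∀ R, ∃ C, 0 ≤ C ∧ ∀ x, ‖x‖ ≤ R → 0 < ℓ x → |f x| ≤ C * ℓ x ^ p
  exists_abs_symmSecondDiff_le : ∀ R, ∃ C, 0 ≤ C ∧ ∀ x y, ‖x‖ ≤ R → 0 < ℓ x →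
    ‖ℓ‖ * ‖y‖ ≤ ℓ x / 2 → |symmSecondDiff f x y| ≤ C * (ℓ x ^ p * (‖ℓ‖ * ‖y‖ / ℓ x) ^ 2)

theorem IsC2UpToBoundary.measurable [MeasurableSpace E] [BorelSpace E] {f : E → ℝ}
    (hf : IsC2UpToBoundary ℓ f) (hf0 : ∀ x, ℓ x ≤ 0 → f x = 0) : Measurable f := by
  have hindicator : {x | 0 < ℓ x}.indicator f = f :=
    indicator_eq_self.2 fun x hx => not_le.1 fun hℓx => hx (hf0 x hℓx)
  classical
  rw [← hindicator, ← piecewise_eq_indicator]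
  exact hf.contDiffOn.continuousOn.measurable_piecewise continuousOn_const
    (measurableSet_lt measurable_const ℓ.continuous.measurable)

theorem isC2UpToBoundary_of_contDiff {f : E → ℝ} (hf : ContDiff ℝ 2 f) : IsC2UpToBoundary ℓ f where
  contDiffOn := hf.contDiffOn
  exists_le _ hK :=
    (exists_abs_add_norm_fderiv_le hK fun _ _ => hf.contDiffAt).imp fun _ hM x hx _ => hM x hx

theorem norm_le_mul_norm_mul_div {x y : E} {R : ℝ} (hx : ‖x‖ ≤ R) (hℓx : 0 < ℓ x) :
    ‖y‖ ≤ R * (‖ℓ‖ * ‖y‖ / ℓ x) := by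
  rw [← mul_div_assoc, le_div_iff₀ hℓx]
  calc ‖y‖ * ℓ x ≤ ‖y‖ * (‖ℓ‖ * R) := by
        gcongr
        exact (le_abs_self _).trans (ℓ.le_opNorm_of_le hx)
    _ = R * (‖ℓ‖ * ‖y‖) := by ring

theorem closedBall_subset_of_norm_mul_le {x y : E} {R : ℝ} (hx : ‖x‖ ≤ R) (hℓx : 0 < ℓ x)
    (hy : ‖ℓ‖ * ‖y‖ ≤ ℓ x / 2) : closedBall x ‖y‖ ⊆ closedBall 0 (2 * R) ∩ {z | 0 < ℓ z} := by
  intro z hz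
  have hzx : ‖z - x‖ ≤ ‖y‖ := by simpa [dist_eq_norm] using hz
  have hyR : ‖y‖ ≤ R := by
    have hhalf : ‖ℓ‖ * ‖y‖ / ℓ x ≤ 1 / 2 := by
      rw [div_le_iff₀ hℓx]
      linarith
    nlinarith [norm_le_mul_norm_mul_div (y := y) hx hℓx, norm_nonneg x]
  have hℓz : |ℓ z - ℓ x| ≤ ℓ x / 2 := by
    rw [← map_sub]
    exact (ℓ.le_opNorm_of_le hzx).trans hy
  constructor
  · rw [mem_closedBall_zero_iff]
    linarith [norm_le_norm_add_norm_sub' z x]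
  · change 0 < ℓ z
    linarith [neg_le_of_abs_le hℓz]

namespace IsC2UpToBoundary

variable [FiniteDimensional ℝ E] {f : E → ℝ}

theorem exists_abs_le_mul_norm (hf : IsC2UpToBoundary ℓ f) (R : ℝ) :
    ∃ M, 0 ≤ M ∧ ∀ x y, ‖x‖ ≤ R → 0 < ℓ x → ‖ℓ‖ * ‖y‖ ≤ ℓ x / 2 →
      |f x| ≤ M ∧ |f (x + y) - f x| ≤ M * ‖y‖ ∧ |f (x - y) - f x| ≤ M * ‖y‖ ∧
        |symmSecondDiff f x y| ≤ 2 * M * ‖y‖ ^ 2 := by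
  obtain ⟨M, hM⟩ := hf.exists_le _ (isCompact_closedBall 0 (2 * R))
  refine ⟨|M|, abs_nonneg M, fun x y hx hℓx hy => ?_⟩
  have hball := closedBall_subset_of_norm_mul_le hx hℓx hy
  have hsmooth : ∀ z ∈ closedBall x ‖y‖, ContDiffAt ℝ 2 f z := fun z hz =>
    hf.contDiffOn.contDiffAt ((isOpen_lt continuous_const ℓ.continuous).mem_nhds (hball hz).2)
  have hbound : ∀ z ∈ closedBall x ‖y‖,
      |f z| ≤ |M| ∧ ‖fderiv ℝ f z‖ ≤ |M| ∧ ‖fderiv ℝ (fderiv ℝ f) z‖ ≤ |M| := by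
    intro z hz
    have hz' := (hM z (hball hz).1 (hball hz).2).trans (le_abs_self M)
    have hf0 : 0 ≤ |f z| := abs_nonneg _
    have hf1 : 0 ≤ ‖fderiv ℝ f z‖ := by positivity
    have hf2 : 0 ≤ ‖fderiv ℝ (fderiv ℝ f) z‖ := by positivity
    exact ⟨by linarith, by linarith, by linarith⟩
  obtain ⟨hadd, hsub⟩ := abs_sub_le_of_norm_fderiv_le
    (fun z hz => (hsmooth z hz).differentiableAt two_ne_zero) (fun z hz => (hbound z hz).2.1)
  exact ⟨(hbound x (mem_closedBall_self (norm_nonneg y))).1, hadd, hsub,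
    abs_symmSecondDiff_le hsmooth (fun z hz => (hbound z hz).2.2)⟩

theorem exists_abs_le_mul_ratio (hf : IsC2UpToBoundary ℓ f) (R : ℝ) :
    ∃ C, 0 ≤ C ∧ ∀ x y, ‖x‖ ≤ R → 0 < ℓ x → ‖ℓ‖ * ‖y‖ ≤ ℓ x / 2 →
      |f x| ≤ C ∧ |f (x + y) - f x| ≤ C * (‖ℓ‖ * ‖y‖ / ℓ x) ∧
        |f (x - y) - f x| ≤ C * (‖ℓ‖ * ‖y‖ / ℓ x) ∧
        |symmSecondDiff f x y| ≤ C * (‖ℓ‖ * ‖y‖ / ℓ x) ^ 2 := by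
  obtain ⟨M, hM0, hM⟩ := hf.exists_abs_le_mul_norm R
  set B := 1 + |R|
  have hB1 : 1 ≤ B := le_add_of_nonneg_right (abs_nonneg R)
  have hB2 : B ≤ 2 * B ^ 2 := by nlinarith
  refine ⟨M * (2 * B ^ 2), by positivity, fun x y hx hℓx hy => ?_⟩
  obtain ⟨hval, hadd, hsub, hsecond⟩ := hM x y hx hℓx hy
  set ρ := ‖ℓ‖ * ‖y‖ / ℓ x
  have hyρ : ‖y‖ ≤ B * ρ := norm_le_mul_norm_mul_div (by linarith [le_abs_self R]) hℓx
  have hfirst : M * ‖y‖ ≤ M * (2 * B ^ 2) * ρ := by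
    calc M * ‖y‖ ≤ M * (B * ρ) := by gcongr
      _ ≤ M * (2 * B ^ 2 * ρ) := by gcongr
      _ = M * (2 * B ^ 2) * ρ := (mul_assoc ..).symm
  refine ⟨hval.trans (le_mul_of_one_le_right hM0 (hB1.trans hB2)), hadd.trans hfirst,
    hsub.trans hfirst, ?_⟩
  calc |symmSecondDiff f x y| ≤ 2 * M * ‖y‖ ^ 2 := hsecond
    _ ≤ 2 * M * (B * ρ) ^ 2 := by gcongr
    _ = M * (2 * B ^ 2) * ρ ^ 2 := by ring

theorem hasBoundaryOrder_zero (hf : IsC2UpToBoundary ℓ f) (hf0 : ∀ x, ℓ x ≤ 0 → f x = 0) :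
    HasBoundaryOrder ℓ 0 f where
  eq_zero := hf0
  exists_abs_le R := by
    obtain ⟨C, hC0, hC⟩ := hf.exists_abs_le_mul_ratio R
    refine ⟨C, hC0, fun x hx hℓx => ?_⟩
    simpa using (hC x 0 hx hℓx (by simpa using (half_pos hℓx).le)).1
  exists_abs_symmSecondDiff_le R := by
    obtain ⟨C, hC0, hC⟩ := hf.exists_abs_le_mul_ratio R
    refine ⟨C, hC0, fun x y hx hℓx hy => ?_⟩
    simpa using (hC x y hx hℓx hy).2.2.2

end IsC2UpToBoundary

theorem max_add_zero_rpow_eq {d t : ℝ} (α : ℝ) (hd : 0 < d) (ht : |t| ≤ d / 2) :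
    max (d + t) 0 ^ α = d ^ α * (1 + t / d) ^ α := by
  have hadd : 0 ≤ d + t := by linarith [neg_le_of_abs_le ht]
  have hfactor : d + t = d * (1 + t / d) := by field_simp
  rw [max_eq_left hadd, hfactor, Real.mul_rpow hd.le]
  exact nonneg_of_mul_nonneg_right (hfactor ▸ hadd) hd

theorem exists_abs_max_rpow_sub_le (ℓ : E →L[ℝ] ℝ) (α : ℝ) :
    ∃ C, 0 ≤ C ∧ ∀ x y, 0 < ℓ x → ‖ℓ‖ * ‖y‖ ≤ ℓ x / 2 →
      |max (ℓ (x + y)) 0 ^ α - max (ℓ x) 0 ^ α| ≤ C * (ℓ x ^ α * (‖ℓ‖ * ‖y‖ / ℓ x)) ∧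
      |max (ℓ (x - y)) 0 ^ α - max (ℓ x) 0 ^ α| ≤ C * (ℓ x ^ α * (‖ℓ‖ * ‖y‖ / ℓ x)) ∧
      |symmSecondDiff (fun z => max (ℓ z) 0 ^ α) x y| ≤
        C * (ℓ x ^ α * (‖ℓ‖ * ‖y‖ / ℓ x) ^ 2) := by
  obtain ⟨C, hC0, hC⟩ := exists_abs_one_add_rpow_sub_one_le α
  refine ⟨C, hC0, fun x y hℓx hy => ?_⟩
  have hℓy : |ℓ y| ≤ ℓ x / 2 := (ℓ.le_opNorm y).trans hy
  have hself : max (ℓ x) 0 ^ α = ℓ x ^ α := by rw [max_eq_left hℓx.le]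
  have hadd : max (ℓ (x + y)) 0 ^ α = ℓ x ^ α * (1 + ℓ y / ℓ x) ^ α := by
    rw [map_add, max_add_zero_rpow_eq α hℓx hℓy]
  have hsub : max (ℓ (x - y)) 0 ^ α = ℓ x ^ α * (1 - ℓ y / ℓ x) ^ α := by
    rw [map_sub, sub_eq_add_neg, max_add_zero_rpow_eq α hℓx (by rwa [abs_neg]), neg_div,
      ← sub_eq_add_neg]
  set ρ := ‖ℓ‖ * ‖y‖ / ℓ x
  set t := ℓ y / ℓ x with ht
  have htρ : |t| ≤ ρ := by
    rw [ht, abs_div, abs_of_pos hℓx]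
    exact div_le_div_of_nonneg_right (ℓ.le_opNorm y) hℓx.le
  have ht2 : |t| ≤ 1 / 2 := by
    rw [ht, abs_div, abs_of_pos hℓx, div_le_iff₀ hℓx]
    linarith
  have hscale : ∀ (c : ℝ) (k : ℕ), |c| ≤ C * |t| ^ k →
      |ℓ x ^ α * c| ≤ C * (ℓ x ^ α * ρ ^ k) := by
    intro c k hc
    calc |ℓ x ^ α * c| = ℓ x ^ α * |c| := by rw [abs_mul, abs_of_nonneg (by positivity)]
      _ ≤ ℓ x ^ α * (C * ρ ^ k) := by gcongr; exact hc.trans (by gcongr)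
      _ = C * (ℓ x ^ α * ρ ^ k) := by ring
  obtain ⟨hadd', hsub', hsecond'⟩ := hC t ht2
  refine ⟨?_, ?_, ?_⟩
  · rw [hadd, hself, ← mul_sub_one]
    simpa using hscale _ 1 (by simpa using hadd')
  · rw [hsub, hself, ← mul_sub_one]
    simpa using hscale _ 1 (by simpa using hsub')
  · rw [symmSecondDiff, hadd, hsub, hself]
    convert hscale _ 2 (by simpa using hsecond') using 2
    ring

namespace HasBoundaryOrder

variable {p : ℝ} {f : E → ℝ}

theorem mono (hf : HasBoundaryOrder ℓ p f) {q : ℝ} (hqp : q ≤ p) : HasBoundaryOrder ℓ q f := by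
  have hpow : ∀ R, ∀ x : E, ‖x‖ ≤ R → 0 < ℓ x → ℓ x ^ p ≤ (‖ℓ‖ * |R|) ^ (p - q) * ℓ x ^ q := by
    intro R x hx hℓx
    have hle : ℓ x ≤ ‖ℓ‖ * |R| :=
      (le_abs_self _).trans (ℓ.le_opNorm_of_le (hx.trans (le_abs_self R)))
    calc ℓ x ^ p = ℓ x ^ (p - q) * ℓ x ^ q := by rw [← Real.rpow_add hℓx, sub_add_cancel]
      _ ≤ (‖ℓ‖ * |R|) ^ (p - q) * ℓ x ^ q := by gcongr
  refine ⟨hf.eq_zero, fun R => ?_, fun R => ?_⟩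
  · obtain ⟨C, hC0, hC⟩ := hf.exists_abs_le R
    refine ⟨C * (‖ℓ‖ * |R|) ^ (p - q), by positivity, fun x hx hℓx => (hC x hx hℓx).trans ?_⟩
    rw [mul_assoc]
    gcongr
    exact hpow R x hx hℓx
  · obtain ⟨C, hC0, hC⟩ := hf.exists_abs_symmSecondDiff_le R
    refine ⟨C * (‖ℓ‖ * |R|) ^ (p - q), by positivity,
      fun x y hx hℓx hy => (hC x y hx hℓx hy).trans ?_⟩
    rw [mul_assoc, ← mul_assoc (_ ^ (p - q))]
    gcongr
    exact hpow R x hx hℓx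

end HasBoundaryOrder

theorem IsC2UpToBoundary.hasBoundaryOrder_max_rpow_mul [FiniteDimensional ℝ E] {ψ : E → ℝ}
    (hψ : IsC2UpToBoundary ℓ ψ) {α : ℝ} (hα : α ≠ 0) :
    HasBoundaryOrder ℓ α fun x => max (ℓ x) 0 ^ α * ψ x where
  eq_zero x hx := by rw [max_eq_right hx, Real.zero_rpow hα, zero_mul]
  exists_abs_le R := by
    obtain ⟨C, hC0, hC⟩ := hψ.exists_abs_le_mul_ratio R
    refine ⟨C, hC0, fun x hx hℓx => ?_⟩
    rw [max_eq_left hℓx.le, abs_mul, abs_of_nonneg (by positivity), mul_comm]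
    gcongr
    exact (hC x 0 hx hℓx (by simpa using (half_pos hℓx).le)).1
  exists_abs_symmSecondDiff_le R := by
    obtain ⟨A, hA0, hA⟩ := hψ.exists_abs_le_mul_ratio R
    obtain ⟨B, hB0, hB⟩ := exists_abs_max_rpow_sub_le ℓ α
    refine ⟨A + 3 * (A * B), by positivity, fun x y hx hℓx hy => ?_⟩
    obtain ⟨hψx, hψadd, hψsub, hψsecond⟩ := hA x y hx hℓx hy
    obtain ⟨hadd, hsub, hsecond⟩ := hB x y hℓx hy
    set φ : E → ℝ := fun z => max (ℓ z) 0 ^ α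
    have hφx : |φ x| = ℓ x ^ α := by
      rw [abs_of_nonneg (Real.rpow_nonneg (le_max_right _ _) α), max_eq_left hℓx.le]
    set ρ := ‖ℓ‖ * ‖y‖ / ℓ x
    have : 0 ≤ ρ := by positivity
    calc |symmSecondDiff (fun z => φ z * ψ z) x y|
        ≤ |φ x * symmSecondDiff ψ x y| + |ψ x * symmSecondDiff φ x y| +
            |(φ (x + y) - φ x) * (ψ (x + y) - ψ x)| +
            |(φ (x - y) - φ x) * (ψ (x - y) - ψ x)| := by
          rw [symmSecondDiff_mul]
          exact (abs_add_le _ _).trans (add_le_add_left (abs_add_three _ _ _) _)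
      _ ≤ ℓ x ^ α * (A * ρ ^ 2) + A * (B * (ℓ x ^ α * ρ ^ 2)) +
            B * (ℓ x ^ α * ρ) * (A * ρ) + B * (ℓ x ^ α * ρ) * (A * ρ) := by
          simp only [abs_mul, hφx]
          gcongr
      _ = (A + 3 * (A * B)) * (ℓ x ^ α * ρ ^ 2) := by ring

namespace HasBoundaryOrder

variable {p q : ℝ} {f g : E → ℝ}

theorem exists_abs_le_rpow (hf : HasBoundaryOrder ℓ p f) (hp : 0 ≤ p) (R : ℝ) :
    ∃ C, 0 ≤ C ∧ ∀ x t, ‖x‖ ≤ R → 0 ≤ t → ℓ x ≤ t → |f x| ≤ C * t ^ p := by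
  obtain ⟨C, hC0, hC⟩ := hf.exists_abs_le R
  refine ⟨C, hC0, fun x t hx ht hxt => ?_⟩
  rcases le_or_gt (ℓ x) 0 with hℓx | hℓx
  · rw [hf.eq_zero x hℓx, abs_zero]
    positivity
  · exact (hC x hx hℓx).trans (by gcongr)

theorem exists_abs_mul_symmSecondDiff_le_of_le (hf : HasBoundaryOrder ℓ p f)
    (hg : HasBoundaryOrder ℓ q g) {κ : ℝ} (hκ0 : 0 ≤ κ) (hκ2 : κ ≤ 2) (R : ℝ) :
    ∃ C, 0 ≤ C ∧ ∀ x y, ‖x‖ ≤ R → 0 < ℓ x → ‖ℓ‖ * ‖y‖ ≤ ℓ x / 2 →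
      |f x * symmSecondDiff g x y| ≤ C * (ℓ x ^ (p + q - κ) * ‖y‖ ^ κ) := by
  obtain ⟨A, hA0, hA⟩ := hf.exists_abs_le R
  obtain ⟨B, hB0, hB⟩ := hg.exists_abs_symmSecondDiff_le R
  refine ⟨A * B * ‖ℓ‖ ^ κ, by positivity, fun x y hx hℓx hy => ?_⟩
  have hρ : ‖ℓ‖ * ‖y‖ / ℓ x ≤ 1 := by
    rw [div_le_one hℓx]
    linarith
  calc |f x * symmSecondDiff g x y|
      ≤ A * ℓ x ^ p * (B * (ℓ x ^ q * (‖ℓ‖ * ‖y‖ / ℓ x) ^ (2 : ℝ))) := by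
        rw [abs_mul, Real.rpow_two]
        gcongr
        exacts [hA x hx hℓx, hB x y hx hℓx hy]
    _ ≤ A * ℓ x ^ p * (B * (ℓ x ^ q * (‖ℓ‖ * ‖y‖ / ℓ x) ^ κ)) := by
        gcongr A * ℓ x ^ p * (B * (ℓ x ^ q * ?_))
        exact Real.rpow_le_rpow_of_exponent_ge' (by positivity) hρ hκ0 hκ2
    _ = A * B * ‖ℓ‖ ^ κ * (ℓ x ^ (p + q - κ) * ‖y‖ ^ κ) := by
        rw [Real.div_rpow (by positivity) hℓx.le, Real.mul_rpow (by positivity) (by positivity),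
          Real.rpow_sub hℓx, Real.rpow_add hℓx]
        ring

theorem exists_abs_mul_symmSecondDiff_le_of_lt (hf : HasBoundaryOrder ℓ p f)
    (hg : HasBoundaryOrder ℓ q g) (hp : 0 ≤ p) (hq : 0 ≤ q) {κ : ℝ} (hκ : p + q ≤ κ) (R : ℝ) :
    ∃ C, 0 ≤ C ∧ ∀ x y, ‖x‖ ≤ R → 0 < ℓ x → ‖y‖ ≤ 1 → ℓ x / 2 < ‖ℓ‖ * ‖y‖ →
      |f x * symmSecondDiff g x y| ≤ C * (ℓ x ^ (p + q - κ) * ‖y‖ ^ κ) := by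
  obtain ⟨A, hA0, hA⟩ := hf.exists_abs_le_rpow hp R
  obtain ⟨B, hB0, hB⟩ := hg.exists_abs_le_rpow hq (R + 1)
  refine ⟨A * (4 * B) * (3 * ‖ℓ‖) ^ κ, by positivity, fun x y hx hℓx hy1 hy => ?_⟩
  set t := 3 * ‖ℓ‖ * ‖y‖ with ht
  have ht0 : 0 < t := by linarith
  have hxt : ℓ x ≤ t := by linarith
  have hℓy := abs_le.1 (ℓ.le_opNorm y)
  have hsecond : |symmSecondDiff g x y| ≤ 4 * (B * t ^ q) := by
    refine abs_symmSecondDiff_le_four_mul (hB _ t ?_ ht0.le ?_) (hB _ t ?_ ht0.le ?_)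
      (hB x t (by linarith) ht0.le hxt)
    · linarith [norm_add_le x y]
    · rw [map_add]
      linarith
    · linarith [norm_sub_le x y]
    · rw [map_sub]
      linarith
  calc |f x * symmSecondDiff g x y| ≤ A * t ^ p * (4 * (B * t ^ q)) := by
        rw [abs_mul]
        gcongr
        exact hA x t hx ht0.le hxt
    _ = A * (4 * B) * (t ^ (p + q - κ) * t ^ κ) := by
        rw [← Real.rpow_add ht0, sub_add_cancel, Real.rpow_add ht0]
        ring
    _ ≤ A * (4 * B) * (ℓ x ^ (p + q - κ) * t ^ κ) := by
        gcongr A * (4 * B) * (?_ * t ^ κ)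
        exact Real.rpow_le_rpow_of_nonpos hℓx hxt (sub_nonpos.2 hκ)
    _ = A * (4 * B) * (3 * ‖ℓ‖) ^ κ * (ℓ x ^ (p + q - κ) * ‖y‖ ^ κ) := by
        rw [ht, Real.mul_rpow (by positivity) (by positivity)]
        ring

theorem exists_abs_mul_symmSecondDiff_le (hf : HasBoundaryOrder ℓ p f)
    (hg : HasBoundaryOrder ℓ q g) (hp : 0 ≤ p) (hq : 0 ≤ q) {κ : ℝ} (hκ : p + q ≤ κ) (hκ2 : κ ≤ 2)
    (R : ℝ) : ∃ C, ∀ x y, ‖x‖ ≤ R → 0 < ℓ x → ‖y‖ ≤ 1 →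
      |f x * symmSecondDiff g x y| ≤ C * (ℓ x ^ (p + q - κ) * ‖y‖ ^ κ) := by
  obtain ⟨A, hA0, hA⟩ :=
    hf.exists_abs_mul_symmSecondDiff_le_of_le hg ((add_nonneg hp hq).trans hκ) hκ2 R
  obtain ⟨B, hB0, hB⟩ := hf.exists_abs_mul_symmSecondDiff_le_of_lt hg hp hq hκ R
  refine ⟨A + B, fun x y hx hℓx hy => ?_⟩
  have : 0 ≤ ℓ x ^ (p + q - κ) * ‖y‖ ^ κ := by positivity
  rw [add_mul]
  rcases le_or_gt (‖ℓ‖ * ‖y‖) (ℓ x / 2) with hxy | hxy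
  · exact (hA x y hx hℓx hxy).trans (le_add_of_nonneg_right (by positivity))
  · exact (hB x y hx hℓx hy hxy).trans (le_add_of_nonneg_left (by positivity))

end HasBoundaryOrder

theorem exists_mul_symmSecondDiff_eq_zero_of_lt_norm {F : Type*} [NormedAddCommGroup F]
    {f g : F → ℝ} (h : HasCompactSupport f ∨ HasCompactSupport g) :
    ∃ R, ∀ x y, R < ‖x‖ → ‖y‖ ≤ 1 → f x * symmSecondDiff g x y = 0 := by
  rcases h with hf | hg
  · obtain ⟨R, hR⟩ := hf.isCompact.isBounded.exists_norm_le
    refine ⟨R, fun x y hx _ => ?_⟩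
    rw [image_eq_zero_of_notMem_tsupport fun hmem => hx.not_ge (hR x hmem), zero_mul]
  · obtain ⟨R, hR⟩ := hg.isCompact.isBounded.exists_norm_le
    have hg0 : ∀ z, R < ‖z‖ → g z = 0 := fun z hz =>
      image_eq_zero_of_notMem_tsupport fun hmem => hz.not_ge (hR z hmem)
    refine ⟨R + 1, fun x y hx hy => ?_⟩
    have hadd : R < ‖x + y‖ := by linarith [norm_le_add_norm_add x y]
    have hsub : R < ‖x - y‖ := by linarith [norm_sub_norm_le x y]
    rw [symmSecondDiff, hg0 _ hadd, hg0 _ hsub, hg0 x (by linarith)]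
    ring

theorem HasBoundaryOrder.integrableOn_mul_symmSecondDiff_mul_ball [FiniteDimensional ℝ E]
    [MeasurableSpace E] [BorelSpace E] {μ : Measure E} [μ.IsAddHaarMeasure] {p q σ : ℝ}
    {f g K : E → ℝ} (hℓ : ℓ ≠ 0) (hf : HasBoundaryOrder ℓ p f) (hg : HasBoundaryOrder ℓ q g)
    (hp : 0 ≤ p) (hq : 0 ≤ q) (hfm : Measurable f) (hgm : Measurable g)
    (hc : HasCompactSupport f ∨ HasCompactSupport g) (hK : IsKernelOfOrder σ K) (hσ2 : σ < 2)
    (hpq : p + q ≤ σ) (hσ : σ < p + q + 1) :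
    IntegrableOn (fun z : E × E => f z.1 * symmSecondDiff g z.1 z.2 * K z.2) (univ ×ˢ ball 0 1)
      (μ.prod μ) := by
  obtain ⟨κ, hσκ, hκ⟩ := exists_between (lt_min hσ2 hσ)
  obtain ⟨hκ2, hκ1⟩ := lt_min_iff.1 hκ
  obtain ⟨R, hR⟩ := exists_mul_symmSecondDiff_eq_zero_of_lt_norm hc
  obtain ⟨C, hC⟩ := hf.exists_abs_mul_symmSecondDiff_le hg hp hq (hpq.trans hσκ.le) hκ2.le R
  have : Nontrivial E := not_subsingleton_iff_nontrivial.1 fun _ => hℓ (Subsingleton.elim _ _)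
  set S : Set E := {x | 0 < ℓ x ∧ ‖x‖ ≤ R}
  have hS : MeasurableSet S := (measurableSet_lt measurable_const ℓ.continuous.measurable).inter
    (measurableSet_le measurable_norm measurable_const)
  have hdom : IntegrableOn (fun z : E × E => C * ℓ z.1 ^ (p + q - κ) * |‖z.2‖ ^ κ * K z.2|)
      (S ×ˢ ball 0 1) (μ.prod μ) := by
    rw [IntegrableOn, ← Measure.prod_restrict]
    exact ((integrableOn_rpow_halfBall hℓ (by linarith) R).const_mul C).mul_prod
      (hK.integrableOn_norm_rpow_mul_ball hσκ).abs
  have hmeas : Measurable fun z : E × E => f z.1 * symmSecondDiff g z.1 z.2 * K z.2 :=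
    ((hfm.comp measurable_fst).mul (measurable_uncurry_symmSecondDiff hgm)).mul
      (hK.measurable.comp measurable_snd)
  refine IntegrableOn.of_forall_sdiff_eq_zero (hdom.mono' hmeas.aestronglyMeasurable ?_)
    (MeasurableSet.univ.prod measurableSet_ball) ?_
  · filter_upwards [ae_restrict_mem (hS.prod measurableSet_ball)] with ⟨x, y⟩ ⟨⟨hℓx, hx⟩, hy⟩
    have hbound := hC x y hx hℓx (by simpa using (mem_ball_zero_iff.1 hy).le)
    calc ‖f x * symmSecondDiff g x y * K y‖ = |f x * symmSecondDiff g x y| * |K y| := abs_mul _ _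
      _ ≤ C * (ℓ x ^ (p + q - κ) * ‖y‖ ^ κ) * |K y| := by gcongr
      _ = C * ℓ x ^ (p + q - κ) * |‖y‖ ^ κ * K y| := by
        rw [abs_mul, abs_of_nonneg (by positivity : 0 ≤ ‖y‖ ^ κ)]
        ring
  · rintro ⟨x, y⟩ ⟨⟨-, hy⟩, hxy⟩
    rcases le_or_gt (ℓ x) 0 with hℓx | hℓx
    · simp [hf.eq_zero x hℓx]
    · have hx : R < ‖x‖ := not_le.1 fun hx => hxy ⟨⟨hℓx, hx⟩, hy⟩
      simp [hR x y hx (mem_ball_zero_iff.1 hy).le]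

end HalfSpace

section Tail

variable {E : Type*} [NormedAddCommGroup E] [NormedSpace ℝ E] [MeasurableSpace E]
  [BorelSpace E] {μ : Measure E} {σ : ℝ} {u v K : E → ℝ}

/-- `u` belongs to the tail space `L¹_σ` of functions integrable against the weight
`(1 + |x|) ^ (-(d + σ))`, on which kernels of order `σ` act away from the origin. -/
def TailIntegrable (σ : ℝ) (u : E → ℝ) (μ : Measure E) : Prop :=
  Integrable (fun x => u x * (1 + ‖x‖) ^ (-(finrank ℝ E + σ))) μ

namespace TailIntegrable

theorem integrableOn_mul_comp_mul_compl_ball [IsFiniteMeasureOnCompacts μ]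
    (hu : TailIntegrable σ u μ) (hum : Measurable u) (hv : Continuous v) (hvc : HasCompactSupport v)
    (hK : IsKernelOfOrder σ K) (hσ : 0 ≤ σ) {T : E × E → E}
    (hT : MeasurePreserving (fun z : E × E => (z.1, T z)) (μ.prod μ) (μ.prod μ))
    (hTle : ∀ x y, ‖T (x, y)‖ ≤ ‖x‖ + ‖y‖) :
    IntegrableOn (fun z : E × E => v z.1 * u (T z) * K z.2) (univ ×ˢ (ball 0 1)ᶜ) (μ.prod μ) := by
  obtain ⟨R, hR⟩ := hvc.isCompact.isBounded.exists_norm_le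
  obtain ⟨C, hC⟩ := hK.exists_abs_le_one_add_norm_rpow hσ (abs_nonneg R)
  have hdom : Integrable
      (fun z : E × E => C * |v z.1 * (u (T z) * (1 + ‖T z‖) ^ (-(finrank ℝ E + σ)))|)
      (μ.prod μ) :=
    (hT.integrable_comp_of_integrable
      ((hv.integrable_of_hasCompactSupport hvc).mul_prod hu)).abs.const_mul C
  have hmeas : Measurable fun z : E × E => v z.1 * u (T z) * K z.2 :=
    ((hv.measurable.comp measurable_fst).mul (hum.comp hT.measurable.snd)).mul
      (hK.measurable.comp measurable_snd)
  refine hdom.integrableOn.mono' hmeas.aestronglyMeasurable ?_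
  filter_upwards [ae_restrict_mem (MeasurableSet.univ.prod measurableSet_ball.compl)]
    with ⟨x, y⟩ ⟨_, hy⟩
  by_cases hx : x ∈ tsupport v
  · have hKy : |K y| ≤ C * (1 + ‖T (x, y)‖) ^ (-(finrank ℝ E + σ)) :=
      hC y _ (by simpa using hy)
        ((hTle x y).trans (by gcongr; exact (hR x hx).trans (le_abs_self R)))
    calc ‖v x * u (T (x, y)) * K y‖ = |v x * u (T (x, y))| * |K y| := norm_mul _ _
      _ ≤ |v x * u (T (x, y))| * (C * (1 + ‖T (x, y)‖) ^ (-(finrank ℝ E + σ))) := by gcongr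
      _ = C * |v x * (u (T (x, y)) * (1 + ‖T (x, y)‖) ^ (-(finrank ℝ E + σ)))| := by
        rw [← mul_assoc (v x), abs_mul (v x * _), abs_of_nonneg (by positivity :
          0 ≤ (1 + ‖T (x, y)‖) ^ (-(finrank ℝ E + σ)))]
        ring
  · simp [image_eq_zero_of_notMem_tsupport hx]

variable [FiniteDimensional ℝ E]

theorem locallyIntegrable (hu : TailIntegrable σ u μ) : LocallyIntegrable u μ := by
  have hcont : Continuous fun x : E => (1 + ‖x‖) ^ (finrank ℝ E + σ) :=
    (by fun_prop : Continuous fun x : E => 1 + ‖x‖).rpow_const fun x => .inl (by positivity)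
  have hweighted : LocallyIntegrable (fun x => u x * (1 + ‖x‖) ^ (-(finrank ℝ E + σ))) μ :=
    Integrable.locallyIntegrable hu
  refine (hweighted.mul_continuous hcont).congr (.of_forall fun x => ?_)
  simp only
  rw [mul_assoc, ← Real.rpow_add (by positivity), neg_add_cancel, Real.rpow_zero, mul_one]

end TailIntegrable

variable [FiniteDimensional ℝ E] [μ.IsAddHaarMeasure]

theorem tailIntegrable_of_abs_le {q β : ℝ} (hum : AEStronglyMeasurable u μ)
    (hq0 : 0 ≤ q) (hqσ : q < σ) (hu : ∀ x, |u x| ≤ β * (1 + ‖x‖ ^ q)) : TailIntegrable σ u μ := by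
  have hdom : Integrable (fun x : E => 2 * β * (1 + ‖x‖) ^ (-(finrank ℝ E + σ - q))) μ :=
    (integrable_one_add_norm (by linarith)).const_mul (2 * β)
  have hβ : 0 ≤ β := by
    have h0 := (abs_nonneg _).trans (hu 0)
    exact nonneg_of_mul_nonneg_left h0 (by positivity)
  have hcont : Continuous fun x : E => (1 + ‖x‖) ^ (-(finrank ℝ E + σ)) :=
    (by fun_prop : Continuous fun x : E => 1 + ‖x‖).rpow_const fun x => .inl (by positivity)
  refine hdom.mono' (hum.mul hcont.aestronglyMeasurable) (.of_forall fun x => ?_)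
  have hone : 1 ≤ (1 + ‖x‖) ^ q :=
    Real.one_le_rpow (le_add_of_nonneg_right (norm_nonneg x)) hq0
  have hpow : ‖x‖ ^ q ≤ (1 + ‖x‖) ^ q := by
    gcongr
    exact le_add_of_nonneg_left zero_le_one
  calc ‖u x * (1 + ‖x‖) ^ (-(finrank ℝ E + σ))‖ = |u x| * (1 + ‖x‖) ^ (-(finrank ℝ E + σ)) := by
        rw [norm_mul, Real.norm_eq_abs, Real.norm_of_nonneg (by positivity)]
    _ ≤ β * (2 * (1 + ‖x‖) ^ q) * (1 + ‖x‖) ^ (-(finrank ℝ E + σ)) := by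
        gcongr
        exact (hu x).trans (by gcongr; linarith)
    _ = 2 * β * (1 + ‖x‖) ^ (-(finrank ℝ E + σ - q)) := by
        rw [neg_sub, sub_eq_add_neg q, Real.rpow_add (by positivity)]
        ring

namespace TailIntegrable

theorem integrableOn_mul_add_mul_compl_ball (hu : TailIntegrable σ u μ) (hum : Measurable u)
    (hv : Continuous v) (hvc : HasCompactSupport v) (hK : IsKernelOfOrder σ K) (hσ : 0 ≤ σ) :
    IntegrableOn (fun z : E × E => v z.1 * u (z.1 + z.2) * K z.2) (univ ×ˢ (ball 0 1)ᶜ)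
      (μ.prod μ) :=
  hu.integrableOn_mul_comp_mul_compl_ball hum hv hvc hK hσ (measurePreserving_prod_add μ μ)
    norm_add_le

theorem integrableOn_mul_sub_mul_compl_ball (hu : TailIntegrable σ u μ) (hum : Measurable u)
    (hv : Continuous v) (hvc : HasCompactSupport v) (hK : IsKernelOfOrder σ K) (hσ : 0 ≤ σ) :
    IntegrableOn (fun z : E × E => v z.1 * u (z.1 - z.2) * K z.2) (univ ×ˢ (ball 0 1)ᶜ)
      (μ.prod μ) := by
  refine hu.integrableOn_mul_comp_mul_compl_ball hum hv hvc hK hσ ?_ norm_sub_le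
  exact (MeasurePreserving.id μ).skew_product (g := fun x y => x - y)
    (measurable_fst.sub measurable_snd) (.of_forall fun x =>
      (Measure.measurePreserving_sub_left μ x).map_eq)

theorem integrableOn_mul_mul_compl_ball (hu : TailIntegrable σ u μ)
    (hv : Continuous v) (hvc : HasCompactSupport v) (hK : IsKernelOfOrder σ K) (hσ : 0 < σ) :
    IntegrableOn (fun z : E × E => v z.1 * u z.1 * K z.2) (univ ×ˢ (ball 0 1)ᶜ) (μ.prod μ) := by
  rw [IntegrableOn, ← Measure.prod_restrict, Measure.restrict_univ]
  exact (hu.locallyIntegrable.integrable_smul_left_of_hasCompactSupport hv hvc).mul_prod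
    (hK.integrableOn_compl_ball hσ)

theorem integrableOn_mul_symmSecondDiff_mul_compl_ball_swap (hu : TailIntegrable σ u μ)
    (hum : Measurable u) (hv : Continuous v) (hvc : HasCompactSupport v)
    (hK : IsKernelOfOrder σ K) (hσ : 0 < σ) :
    IntegrableOn (fun z : E × E => v z.1 * symmSecondDiff u z.1 z.2 * K z.2)
      (univ ×ˢ (ball 0 1)ᶜ) (μ.prod μ) := by
  refine (((hu.integrableOn_mul_add_mul_compl_ball hum hv hvc hK hσ.le).add
    (hu.integrableOn_mul_sub_mul_compl_ball hum hv hvc hK hσ.le)).sub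
    ((hu.integrableOn_mul_mul_compl_ball hv hvc hK hσ).const_mul 2)).congr (.of_forall fun z => ?_)
  simp only [Pi.add_apply, Pi.sub_apply, symmSecondDiff]
  ring

theorem integrableOn_mul_symmSecondDiff_mul_compl_ball (hu : TailIntegrable σ u μ)
    (hum : Measurable u) (hv : Continuous v) (hvc : HasCompactSupport v)
    (hK : IsKernelOfOrder σ K) (hσ : 0 < σ) :
    IntegrableOn (fun z : E × E => u z.1 * symmSecondDiff v z.1 z.2 * K z.2)
      (univ ×ˢ (ball 0 1)ᶜ) (μ.prod μ) := by
  have hsub := hu.integrableOn_mul_sub_mul_compl_ball hum hv hvc hK hσ.le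
  have hadd := hu.integrableOn_mul_add_mul_compl_ball hum hv hvc hK hσ.le
  have hself := (hu.integrableOn_mul_mul_compl_ball hv hvc hK hσ).const_mul 2
  simp only [IntegrableOn, ← Measure.prod_restrict, Measure.restrict_univ] at hsub hadd hself ⊢
  have hadd' := (measurePreserving_add_prod μ _).integrable_comp_of_integrable hsub
  have hsub' := (measurePreserving_sub_prod μ _).integrable_comp_of_integrable hadd
  refine ((hadd'.add hsub').sub hself).congr (.of_forall fun z => ?_)
  simp only [Pi.add_apply, Pi.sub_apply, Function.comp_apply, symmSecondDiff, add_sub_cancel_right,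
    sub_add_cancel]
  ring

end TailIntegrable

end Tail

section NonlocalOperator

variable {E : Type*} [NormedAddCommGroup E] [MeasurableSpace E] {μ : Measure E} {u v K : E → ℝ}

/-- The nonlocal operator with kernel `K`, acting through symmetric second differences; its
value is `0` at points where the integral does not converge absolutely. -/
noncomputable def nonlocalOperator (μ : Measure E) (K w : E → ℝ) (x : E) : ℝ :=
  ∫ y, symmSecondDiff w x y * K y ∂μ

theorem mul_nonlocalOperator (x : E) :
    u x * nonlocalOperator μ K v x = ∫ y, u x * symmSecondDiff v x y * K y ∂μ := by
  simp only [nonlocalOperator, mul_assoc, integral_const_mul]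

theorem integrable_mul_nonlocalOperator [SFinite μ]
    (h : Integrable (fun z : E × E => u z.1 * symmSecondDiff v z.1 z.2 * K z.2) (μ.prod μ)) :
    Integrable (fun x => u x * nonlocalOperator μ K v x) μ := by
  simpa only [mul_nonlocalOperator] using h.integral_prod_left

theorem integral_mul_nonlocalOperator [SFinite μ]
    (h : Integrable (fun z : E × E => u z.1 * symmSecondDiff v z.1 z.2 * K z.2) (μ.prod μ)) :
    ∫ x, u x * nonlocalOperator μ K v x ∂μ =
      ∫ y, (∫ x, u x * symmSecondDiff v x y ∂μ) * K y ∂μ := by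
  simp only [mul_nonlocalOperator, ← integral_mul_const]
  exact integral_integral_swap h

theorem integral_mul_nonlocalOperator_comm [BorelSpace E] [SFinite μ] [μ.IsAddRightInvariant]
    (hu : LocallyIntegrable u μ) (hv : Continuous v) (hvc : HasCompactSupport v)
    (huv : Integrable (fun z : E × E => u z.1 * symmSecondDiff v z.1 z.2 * K z.2) (μ.prod μ))
    (hvu : Integrable (fun z : E × E => v z.1 * symmSecondDiff u z.1 z.2 * K z.2) (μ.prod μ)) :
    ∫ x, u x * nonlocalOperator μ K v x ∂μ = ∫ x, v x * nonlocalOperator μ K u x ∂μ := by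
  simp only [integral_mul_nonlocalOperator huv, integral_mul_nonlocalOperator hvu,
    integral_mul_symmSecondDiff_comm hu hv hvc]

end NonlocalOperator

section IntegrationByParts

theorem integrable_of_integrableOn_univ_prod {X Y G : Type*} [MeasurableSpace X]
    [MeasurableSpace Y] [NormedAddCommGroup G] {m : Measure (X × Y)} {F : X × Y → G} {s : Set Y}
    (hs : IntegrableOn F (univ ×ˢ s) m) (hsc : IntegrableOn F (univ ×ˢ sᶜ) m) :
    Integrable F m := by
  have hunion : IntegrableOn F (univ ×ˢ s ∪ univ ×ˢ sᶜ) m := hs.union hsc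
  rwa [← prod_union, union_compl_self, univ_prod_univ, integrableOn_univ] at hunion

variable {E : Type*} [NormedAddCommGroup E] [NormedSpace ℝ E] [FiniteDimensional ℝ E]
  [MeasurableSpace E] [BorelSpace E] {μ : Measure E} [μ.IsAddHaarMeasure]
  {ℓ : E →L[ℝ] ℝ} {u v K : E → ℝ} {σ p q : ℝ}

theorem TailIntegrable.integrable_mul_symmSecondDiff_mul (hutail : TailIntegrable σ u μ)
    (hℓ : ℓ ≠ 0) (hu : HasBoundaryOrder ℓ p u) (hv : HasBoundaryOrder ℓ q v) (hp : 0 ≤ p)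
    (hq : 0 ≤ q) (hum : Measurable u) (hvcont : Continuous v) (hvc : HasCompactSupport v)
    (hK : IsKernelOfOrder σ K) (hσ0 : 0 < σ) (hσ2 : σ < 2) (hpq : p + q ≤ σ)
    (hσ : σ < p + q + 1) :
    Integrable (fun z : E × E => u z.1 * symmSecondDiff v z.1 z.2 * K z.2) (μ.prod μ) :=
  integrable_of_integrableOn_univ_prod
    (hu.integrableOn_mul_symmSecondDiff_mul_ball hℓ hv hp hq hum hvcont.measurable (.inr hvc) hK
      hσ2 hpq hσ)
    (hutail.integrableOn_mul_symmSecondDiff_mul_compl_ball hum hvcont hvc hK hσ0)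

theorem TailIntegrable.integrable_mul_symmSecondDiff_mul_swap (hutail : TailIntegrable σ u μ)
    (hℓ : ℓ ≠ 0) (hu : HasBoundaryOrder ℓ p u) (hv : HasBoundaryOrder ℓ q v) (hp : 0 ≤ p)
    (hq : 0 ≤ q) (hum : Measurable u) (hvcont : Continuous v) (hvc : HasCompactSupport v)
    (hK : IsKernelOfOrder σ K) (hσ0 : 0 < σ) (hσ2 : σ < 2) (hpq : p + q ≤ σ)
    (hσ : σ < p + q + 1) :
    Integrable (fun z : E × E => v z.1 * symmSecondDiff u z.1 z.2 * K z.2) (μ.prod μ) :=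
  integrable_of_integrableOn_univ_prod
    (hv.integrableOn_mul_symmSecondDiff_mul_ball hℓ hu hq hp hvcont.measurable hum (.inl hvc) hK
      hσ2 (by rwa [add_comm]) (by rwa [add_comm q]))
    (hutail.integrableOn_mul_symmSecondDiff_mul_compl_ball_swap hum hvcont hvc hK hσ0)

theorem stmt10_general (hℓ : ℓ ≠ 0) (hσ0 : 0 < σ) (hσ2 : σ < 2) {α : ℝ} (hα : max (σ - 1) 0 < α)
    (hK : IsKernelOfOrder σ K) {ψ : E → ℝ} (hψ : ContDiff ℝ 2 ψ) (hψc : HasCompactSupport ψ)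
    (hv : ∀ x, v x = max (ℓ x) 0 ^ α * ψ x) (hu : IsC2UpToBoundary ℓ u)
    (hu0 : ∀ x, ℓ x ≤ 0 → u x = 0) (hutail : TailIntegrable σ u μ) :
    Integrable (fun x => u x * nonlocalOperator μ K v x) μ ∧
      Integrable (fun x => v x * nonlocalOperator μ K u x) μ ∧
      ∫ x, u x * nonlocalOperator μ K v x ∂μ = ∫ x, v x * nonlocalOperator μ K u x ∂μ := by
  obtain ⟨hσα, hα0⟩ := max_lt_iff.1 hα
  obtain rfl : v = fun x => max (ℓ x) 0 ^ α * ψ x := funext hv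
  have hvcont : Continuous fun x => max (ℓ x) 0 ^ α * ψ x :=
    ((ℓ.continuous.max continuous_const).rpow_const fun _ => .inr hα0.le).mul hψ.continuous
  have hvq : HasBoundaryOrder ℓ (min α σ) fun x => max (ℓ x) 0 ^ α * ψ x :=
    ((isC2UpToBoundary_of_contDiff hψ).hasBoundaryOrder_max_rpow_mul hα0.ne').mono
      (min_le_left α σ)
  have hσq : σ < 0 + min α σ + 1 := by
    rw [zero_add, ← min_add_add_right]
    exact lt_min (by linarith) (by linarith)
  have hq0 : 0 ≤ min α σ := le_min hα0.le hσ0.le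
  have hqσ : 0 + min α σ ≤ σ := (zero_add _).trans_le (min_le_right α σ)
  have hu_order : HasBoundaryOrder ℓ 0 u := hu.hasBoundaryOrder_zero hu0
  have hum : Measurable u := hu.measurable hu0
  have huv := hutail.integrable_mul_symmSecondDiff_mul hℓ hu_order hvq le_rfl hq0 hum hvcont
    hψc.mul_left hK hσ0 hσ2 hqσ hσq
  have hvu := hutail.integrable_mul_symmSecondDiff_mul_swap hℓ hu_order hvq le_rfl hq0 hum hvcont
    hψc.mul_left hK hσ0 hσ2 hqσ hσq
  exact ⟨integrable_mul_nonlocalOperator huv, integrable_mul_nonlocalOperator hvu,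
    integral_mul_nonlocalOperator_comm hutail.locallyIntegrable hvcont hψc.mul_left huv hvu⟩

end IntegrationByParts

/-- Integration by parts (self-adjointness of `L` against the non-smooth test function
`v_α(x) = (x_N)₊^α ψ(x)`): `∫ u L v_α = ∫ v_α L u`, both integrals being absolutely
convergent. -/
theorem stmt10 (n : ℕ) (s α δ β : ℝ) (hs0 : 0 < s) (hs1 : s < 1)
    (hα1 : max (2 * s - 1) 0 < α) (hα2 : α < 2 * s) (hδ0 : 0 < δ) (hδ2 : δ ≤ 2 * s)
    (hβ : 0 < β)
    (a : EuclideanSpace ℝ (Fin (n + 1)) → ℝ) (ha : Measurable a)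
    (hanonneg : ∀ θ, 0 ≤ a θ) (D : ℝ) (habd : ∀ θ, a θ ≤ D)
    (haeven : ∀ θ, a (-θ) = a θ)
    (ψ : EuclideanSpace ℝ (Fin (n + 1)) → ℝ) (hψ : ContDiff ℝ 2 ψ)
    (hψc : HasCompactSupport ψ)
    (v : EuclideanSpace ℝ (Fin (n + 1)) → ℝ)
    (hv : ∀ x, v x = max (x (Fin.last n)) 0 ^ α * ψ x)
    (u : EuclideanSpace ℝ (Fin (n + 1)) → ℝ)
    (huC2 : ContDiffOn ℝ 2 u {x : EuclideanSpace ℝ (Fin (n + 1)) | 0 < x (Fin.last n)})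
    (huC2bd : ∀ K : Set (EuclideanSpace ℝ (Fin (n + 1))), IsCompact K →
      ∃ M : ℝ, ∀ x ∈ K, 0 < x (Fin.last n) →
        |u x| + ‖fderiv ℝ u x‖ + ‖fderiv ℝ (fderiv ℝ u) x‖ ≤ M)
    (huzero : ∀ x : EuclideanSpace ℝ (Fin (n + 1)), x (Fin.last n) ≤ 0 → u x = 0)
    (hugrowth : ∀ x, |u x| ≤ β * (1 + ‖x‖ ^ (2 * s - δ)))
    (L : (EuclideanSpace ℝ (Fin (n + 1)) → ℝ) → EuclideanSpace ℝ (Fin (n + 1)) → ℝ)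
    (hL : ∀ w z, L w z =
      ∫ y, (w (z + y) + w (z - y) - 2 * w z) * ‖y‖ ^ (-((n + 1 : ℝ) + 2 * s)) *
        a (‖y‖⁻¹ • y)) :
    Integrable (fun x => u x * L v x) ∧ Integrable (fun x => v x * L u x) ∧
      (∫ x, u x * L v x) = ∫ x, v x * L u x := by
  let ℓ : EuclideanSpace ℝ (Fin (n + 1)) →L[ℝ] ℝ := EuclideanSpace.proj (Fin.last n)
  have hℓ : ℓ ≠ 0 := DFunLike.ne_iff.2 ⟨EuclideanSpace.single (Fin.last n) 1, by simp [ℓ]⟩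
  have hu : IsC2UpToBoundary ℓ u := ⟨huC2, huC2bd⟩
  have hK := isKernelOfOrder_norm_rpow_mul (2 * s) ha fun θ =>
    (abs_of_nonneg (hanonneg θ)).trans_le (habd θ)
  have hLK : L = nonlocalOperator volume fun y =>
      ‖y‖ ^ (-(finrank ℝ (EuclideanSpace ℝ (Fin (n + 1))) + 2 * s)) * a (‖y‖⁻¹ • y) := by
    ext w z
    simp only [hL, nonlocalOperator, symmSecondDiff, mul_assoc, finrank_euclideanSpace_fin,
      Nat.cast_add_one]
  rw [hLK]
  exact stmt10_general hℓ (by linarith) (by linarith) hα1 hK hψ hψc hv hu huzero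
    (tailIntegrable_of_abs_le (hu.measurable huzero).aestronglyMeasurable (by linarith)
      (by linarith) hugrowth)
end
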